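/- arXiv:1004.4093 — 4 statements merged into one kernel-verified Lean document; each statement's English description precedes it below -/
import Mathlib

section
/- Let φ, ψ : (ℝⁿ,0) → (ℝᵐ,0) be Nash map germs, and suppose there exists a map τ defined near 0 in ℝⁿ, real analytic at 0, with τ(0)=0 and invertible derivative at 0, such that φ∘τ = ψ on a neighborhood of 0. Then for every c ∈ ℕ there exists a Nash diffeomorphism germ τ̃ of (ℝⁿ,0) such that φ∘τ̃ = ψ on a neighborhood of 0 and all partial derivatives at 0 of τ̃ and of τ of order less than c coincide. -/
open scoped Topology

/-- A Nash map germ `f : (ℝⁿ,0) → (ℝᵐ,0)`: real analytic at `0`, `f 0 = 0`, and each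
component satisfies a nontrivial polynomial equation near `0`. -/
def NashGerm {n m : ℕ} (f : (Fin n → ℝ) → (Fin m → ℝ)) : Prop :=
  AnalyticAt ℝ f 0 ∧ f 0 = 0 ∧
    ∀ j : Fin m, ∃ P : MvPolynomial (Fin (n + 1)) ℝ, P ≠ 0 ∧
      ∀ᶠ x : Fin n → ℝ in 𝓝 0, MvPolynomial.eval (Fin.snoc x (f x j)) P = 0

/-- A Nash diffeomorphism germ of `(ℝⁿ,0)`: a Nash map germ whose derivative at `0` is a
linear isomorphism. -/
def NashDiffeoGerm {n : ℕ} (τ : (Fin n → ℝ) → (Fin n → ℝ)) : Prop :=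
  NashGerm τ ∧ ∃ D : (Fin n → ℝ) ≃L[ℝ] (Fin n → ℝ),
    HasFDerivAt τ (D : (Fin n → ℝ) →L[ℝ] (Fin n → ℝ)) 0

/-!
Germs at `0` that are analytic and algebraic over the polynomials are the power series algebraic
over the polynomials, and these form a Henselian local ring. Artin approximation holds for it: every
finite tuple of power series is approximated, to any order, by algebraic power series satisfying the
same polynomial relations. This goes by induction on the number of variables. Newton's method
reduces the problem to solving the relations modulo a denominator `δ`; after a shear `δ` is regular
in one variable, and Weierstrass preparation turns a solution modulo `δ` into a tuple of power
series in one variable fewer.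

Applied to the Taylor series of `τ` and of the components of `ψ`, it gives `τ'` and `ψ'`. The
algebraic relations of `ψ` and of `φ ∘ τ` hold for the approximations too, and roots of a relation
at which its derivative does not vanish are isolated `𝔪`-adically, so `φ ∘ τ' = ψ' = ψ`.
-/

namespace NashArtin

section PolynomialAlgebra

open Polynomial

section Congruence

variable {R S : Type*} [CommRing R] [CommRing S] {I : Ideal S}

theorem aeval_sub_aeval_mem [Algebra R S] {σ : Type*} {x y : σ → S} (h : ∀ i, x i - y i ∈ I)
    (F : MvPolynomial σ R) : MvPolynomial.aeval x F - MvPolynomial.aeval y F ∈ I := by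
  have hxy : (Ideal.Quotient.mkₐ R I).comp (MvPolynomial.aeval x) =
      (Ideal.Quotient.mkₐ R I).comp (MvPolynomial.aeval y) :=
    MvPolynomial.algHom_ext fun i => by simpa using Ideal.Quotient.eq.mpr (h i)
  exact Ideal.Quotient.eq.mp (DFunLike.congr_fun hxy F)

theorem eval₂_sub_eval₂_mem {κ κ' : R →+* S} (h : ∀ a, κ a - κ' a ∈ I) (x : S) (F : R[X]) :
    eval₂ κ x F - eval₂ κ' x F ∈ I := by
  have hκ : (Ideal.Quotient.mk I).comp κ = (Ideal.Quotient.mk I).comp κ' :=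
    RingHom.ext fun a => Ideal.Quotient.eq.mpr (h a)
  rw [← Ideal.Quotient.eq, hom_eval₂, hom_eval₂, hκ]

end Congruence

section MinimalRelation

theorem exists_pseudo_division {R : Type*} [CommRing R] {f : R[X]} (hf : 0 < f.natDegree)
    (F : R[X]) : ∃ (e : ℕ) (q r : R[X]),
      C f.leadingCoeff ^ e * F = q * f + r ∧ r.natDegree < f.natDegree := by
  induction hn : F.natDegree using Nat.strong_induction_on generalizing F with
  | _ n ih =>
    obtain hlt | hle := lt_or_ge F.natDegree f.natDegree
    · exact ⟨0, 0, F, by simp, hlt⟩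
    obtain ⟨e, q, r, hG, hr⟩ := ih _
      (hn ▸ natDegree_cancelLeads_lt_of_natDegree_le_natDegree hle (hf.trans_le hle)) _ rfl
    refine ⟨e + 1, q + C f.leadingCoeff ^ e * (C F.leadingCoeff *
      X ^ (F.natDegree - f.natDegree)), r, ?_, hr⟩
    rw [cancelLeads, Nat.sub_eq_zero_of_le hle, pow_zero] at hG
    linear_combination hG

/-- `f` is a relation of least degree satisfied by `b` over the image of `β`, among the relations
that `β` does not annihilate: the analogue of a minimal polynomial before passing to fractions. -/
structure IsMinimalRelation {Q B : Type*} [CommRing Q] [CommRing B] (β : Q →+* B) (b : B)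
    (f : Q[X]) : Prop where
  eval₂_eq_zero : eval₂ β b f = 0
  map_leadingCoeff_ne_zero : β f.leadingCoeff ≠ 0
  map_eq_zero_of_natDegree_lt :
    ∀ r : Q[X], eval₂ β b r = 0 → r.natDegree < f.natDegree → r.map β = 0

variable {Q B : Type*} [CommRing Q] [CommRing B] {β : Q →+* B} {b : B}

theorem exists_isMinimalRelation {F : Q[X]} (hF : eval₂ β b F = 0) (hF0 : F.map β ≠ 0) :
    ∃ f, IsMinimalRelation β b f := by
  classical
  have hex : ∃ d, ∃ f : Q[X], (f.map β).natDegree = d ∧ eval₂ β b f = 0 ∧ f.map β ≠ 0 :=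
    ⟨_, F, rfl, hF, hF0⟩
  obtain ⟨g, hgd, hg, hg0⟩ := Nat.find_spec hex
  obtain ⟨f, hfg, hfd⟩ := exists_degree_eq_of_mem_lifts ((lifts_iff_coeff_lifts _).mpr
    fun n => ⟨g.coeff n, (coeff_map β n).symm⟩ : g.map β ∈ lifts β)
  have hfd' : f.natDegree = (g.map β).natDegree := natDegree_eq_of_degree_eq hfd
  refine ⟨f, by rwa [eval₂_eq_eval_map, hfg, ← eval₂_eq_eval_map], ?_, fun r hr hlt => ?_⟩
  · rwa [leadingCoeff, ← coeff_map, hfg, hfd', coeff_natDegree, Ne, leadingCoeff_eq_zero]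
  · by_contra hr0
    exact Nat.find_min hex (natDegree_map_le.trans_lt (hlt.trans_eq (hfd'.trans hgd)))
      ⟨r, rfl, hr, hr0⟩

namespace IsMinimalRelation

variable {f : Q[X]}

theorem natDegree_pos (hf : IsMinimalRelation β b f) : 0 < f.natDegree := by
  rw [Nat.pos_iff_ne_zero]
  intro h
  have h0 := hf.eval₂_eq_zero
  rw [eq_C_of_natDegree_eq_zero h, eval₂_C, ← h] at h0
  exact hf.map_leadingCoeff_ne_zero h0

theorem eval₂_derivative_ne_zero [IsDomain B] [CharZero B] (hf : IsMinimalRelation β b f) :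
    eval₂ β b (derivative f) ≠ 0 := by
  intro h
  have hpos := hf.natDegree_pos
  have h0 := congrArg (coeff · (f.natDegree - 1))
    (hf.map_eq_zero_of_natDegree_lt _ h (natDegree_derivative_lt hpos.ne'))
  simp only [coeff_map, coeff_derivative, Nat.sub_add_cancel hpos, map_mul, coeff_zero] at h0
  refine (mul_eq_zero.mp h0).elim hf.map_leadingCoeff_ne_zero fun h1 => ?_
  rw [← Nat.cast_succ, map_natCast] at h1
  exact Nat.cast_ne_zero.mpr (Nat.succ_ne_zero _) h1

theorem exists_pseudo_dvd (hf : IsMinimalRelation β b f) {F : Q[X]} (hF : eval₂ β b F = 0) :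
    ∃ (e : ℕ) (q r : Q[X]), C f.leadingCoeff ^ e * F = q * f + r ∧ r.map β = 0 := by
  obtain ⟨e, q, r, hdiv, hr⟩ := exists_pseudo_division hf.natDegree_pos F
  refine ⟨e, q, r, hdiv, hf.map_eq_zero_of_natDegree_lt r ?_ hr⟩
  simpa [eval₂_mul, hF, hf.eval₂_eq_zero] using (congrArg (eval₂ β b) hdiv).symm

theorem eval₂_eq_zero_of_specialization (hf : IsMinimalRelation β b f) {H : Type*} [CommRing H]
    [IsDomain H] {κ : Q →+* H} (hκ : RingHom.ker β ≤ RingHom.ker κ) (hl : κ f.leadingCoeff ≠ 0)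
    {x : H} (hx : eval₂ κ x f = 0) {F : Q[X]} (hF : eval₂ β b F = 0) : eval₂ κ x F = 0 := by
  obtain ⟨e, q, r, hdiv, hr⟩ := hf.exists_pseudo_dvd hF
  have hr' : r.map κ = 0 := by
    ext k
    rw [coeff_map, coeff_zero]
    exact hκ (by rw [RingHom.mem_ker, ← coeff_map, hr, coeff_zero])
  have h := congrArg (eval₂ κ x) hdiv
  rw [eval₂_mul, eval₂_add, eval₂_mul, hx, mul_zero, zero_add, eval₂_eq_eval_map (p := r),
    hr', eval_zero, eval₂_pow, eval₂_C] at h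
  exact (mul_eq_zero.mp h).resolve_left (pow_ne_zero _ hl)

end IsMinimalRelation

end MinimalRelation

section Henselian

variable {H : Type*} [CommRing H] (I : Ideal H) [HenselianRing H I]

theorem isUnit_one_add {x : H} (hx : x ∈ I) : IsUnit (1 + x) := by
  simpa [add_comm] using Ideal.mem_jacobson_bot.mp (HenselianRing.jac hx) 1

theorem exists_isUnit_pow_sub_pow_add_mul_eval_eq_zero {h : H} (hh : h ∈ I) {N : ℕ} {r : H[X]}
    (hr : r.natDegree ≤ N) : ∃ V, IsUnit V ∧ V ^ (N + 1) - V ^ N + h * r.eval V = 0 := by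
  have hlower : (C h * r - X ^ N).degree < ((N + 1 : ℕ) : WithBot ℕ) :=
    degree_le_natDegree.trans_lt <| Nat.cast_lt.mpr <| Nat.lt_succ_of_le <|
      (natDegree_sub_le _ _).trans <|
        max_le ((natDegree_C_mul_le h r).trans hr) (natDegree_X_pow_le N)
  have hh0 : Ideal.Quotient.mk I h = 0 := Ideal.Quotient.eq_zero_iff_mem.mpr hh
  obtain ⟨V, hV, hV1⟩ := HenselianRing.is_henselian _ (monic_X_pow_add hlower) 1
    (by simpa using I.mul_mem_right (r.eval 1) hh) (by simp [hh0, derivative_X_pow])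
  rw [IsRoot, eval_add, eval_sub, eval_mul, eval_pow, eval_pow, eval_X, eval_C] at hV
  exact ⟨V, by simpa using isUnit_one_add I hV1, by linear_combination hV⟩

/-- The substitution `z = -h / V` turns the equation into a monic one in `V`. -/
theorem exists_add_add_sq_mul_eval_eq_zero {h : H} (hh : h ∈ I) (q : H[X]) :
    ∃ z ∈ I, h + z + z ^ 2 * q.eval z = 0 := by
  have hdeg : (q.comp (C (-h) * X)).natDegree ≤ q.natDegree := natDegree_comp_le.trans
    (mul_le_of_le_one_right' ((natDegree_C_mul_le _ _).trans natDegree_X_le))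
  obtain ⟨V, hVu, hV⟩ := exists_isUnit_pow_sub_pow_add_mul_eval_eq_zero (N := q.natDegree + 1) I hh
    (natDegree_reflect_le.trans (max_le le_rfl hdeg) |>.trans (Nat.le_succ _))
  let _ := hVu.invertible
  have hinv : V * ⅟V = 1 := mul_invOf_self V
  have hreflect := eval₂_reflect_mul_pow (RingHom.id H) (⅟V) q.natDegree _ hdeg
  rw [eval₂_id, eval₂_id, invOf_invOf, eval_comp, eval_mul, eval_C, eval_X] at hreflect
  refine ⟨-h * ⅟V, I.mul_mem_right _ (I.neg_mem hh), (hVu.pow (q.natDegree + 2)).mul_left_cancel ?_⟩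
  have hpow : V ^ (q.natDegree + 2) * ⅟V ^ (q.natDegree + 2) = 1 := by rw [← mul_pow, hinv, one_pow]
  linear_combination h * hV - h * V ^ (q.natDegree + 1) * hinv +
    h ^ 2 * (reflect q.natDegree (q.comp (C (-h) * X))).eval V * hpow -
    V ^ (q.natDegree + 2) * h ^ 2 * ⅟V ^ 2 * hreflect

theorem exists_root_sub_mem {J : Ideal H} (hJ : J ≤ I) {g : H[X]} {x₀ j : H} (hj : j ∈ J)
    (h : g.eval x₀ = (derivative g).eval x₀ ^ 2 * j) : ∃ x, x - x₀ ∈ J ∧ g.eval x = 0 := by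
  set u := (derivative g).eval x₀
  set k := divX (divX (taylor x₀ g)) with hk
  have hexpand (z : H) : g.eval (x₀ + u * z) =
      u ^ 2 * j + u ^ 2 * z + u ^ 2 * z ^ 2 * k.eval (u * z) := by
    have h0 := divX_mul_X_add (taylor x₀ g)
    have h1 := divX_mul_X_add (divX (taylor x₀ g))
    rw [coeff_divX, taylor_coeff_one, ← hk] at h1
    rw [taylor_coeff_zero, h, ← h1] at h0
    rw [add_comm, ← taylor_eval, ← h0]
    simp only [eval_add, eval_mul, eval_X, eval_C]
    ring
  obtain ⟨z, hzI, hz⟩ := exists_add_add_sq_mul_eval_eq_zero I (hJ hj) (k.comp (C u * X))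
  rw [eval_comp, eval_mul, eval_C, eval_X] at hz
  obtain ⟨v, hv⟩ := isUnit_one_add I (I.mul_mem_right (k.eval (u * z)) hzI)
  have hzJ : z ∈ J := by
    rw [← Ideal.mul_unit_mem_iff_mem J v.isUnit, hv, show z * (1 + z * k.eval (u * z)) = -j by
      linear_combination hz]
    exact J.neg_mem hj
  exact ⟨x₀ + u * z, by simpa using J.mul_mem_left u hzJ,
    by rw [hexpand]; linear_combination u ^ 2 * hz⟩

theorem exists_isUnit_eq_mul {J : Ideal H} (hJ : J ≤ I) {a b c : H}
    (h : a - b ∈ Ideal.span {b * c} * J) : ∃ v : H, IsUnit v ∧ a = b * v := by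
  obtain ⟨j, hj, hab⟩ := Ideal.mem_span_singleton_mul.mp h
  exact ⟨1 + c * j, isUnit_one_add I (I.mul_mem_left c (hJ hj)), by linear_combination -hab⟩

end Henselian

/-- `w` specializes `y`: it satisfies every polynomial relation over `P` that `y` satisfies. The two
tuples may live in different `P`-algebras. -/
def IsSpecialization (P : Type*) [CommRing P] {ι B H : Type*} [CommRing B] [Algebra P B]
    [CommRing H] [Algebra P H] (y : ι → B) (w : ι → H) : Prop :=
  ∀ F : MvPolynomial ι P, MvPolynomial.aeval y F = 0 → MvPolynomial.aeval w F = 0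

section Tougeron

variable {P B H : Type*} [CommRing P] [CommRing B] [Algebra P B] [CommRing H] [Algebra P H]

/-- `δ` plays the role of the Jacobian minor in Tougeron's implicit function theorem for the point
`y`: an approximate specialization `w` of `y`, whose errors are divisible by `δ(w)`, can be
corrected to an exact one. -/
structure IsTougeronDenominator {ι : Type*} (I : Ideal H) (y : ι → B) (δ : MvPolynomial ι P) :
    Prop where
  aeval_ne_zero : MvPolynomial.aeval y δ ≠ 0
  exists_isSpecialization : ∀ J ≤ I, ∀ w : ι → H, MvPolynomial.aeval w δ ≠ 0 →
    (∀ F : MvPolynomial ι P, MvPolynomial.aeval y F = 0 →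
      MvPolynomial.aeval w F ∈ Ideal.span {MvPolynomial.aeval w δ} * J) →
    ∃ w' : ι → H, (∀ i, w' i - w i ∈ J) ∧ IsSpecialization P y w'

theorem isTougeronDenominator_one_of_isEmpty [Nontrivial B] {ι : Type*} [IsEmpty ι] (I : Ideal H)
    (hker : RingHom.ker (algebraMap P B) ≤ RingHom.ker (algebraMap P H)) (y : ι → B) :
    IsTougeronDenominator I y (1 : MvPolynomial ι P) where
  aeval_ne_zero := by simp
  exists_isSpecialization J _ w _ _ := by
    refine ⟨w, by simp, fun F hF => ?_⟩
    obtain ⟨p, rfl⟩ := MvPolynomial.C_surjective ι F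
    rw [MvPolynomial.aeval_C] at hF ⊢
    exact hker hF

variable {I : Ideal H} {ι κ : Type*}

theorem IsTougeronDenominator.rename_equiv (e : ι ≃ κ) {y : κ → B} {δ : MvPolynomial ι P}
    (h : IsTougeronDenominator I (y ∘ e) δ) :
    IsTougeronDenominator I y (MvPolynomial.rename e δ) where
  aeval_ne_zero := by rw [MvPolynomial.aeval_rename]; exact h.aeval_ne_zero
  exists_isSpecialization J hJ w hw hrel := by
    rw [MvPolynomial.aeval_rename] at hw
    simp only [MvPolynomial.aeval_rename] at hrel
    obtain ⟨w', hw', hsp⟩ := h.exists_isSpecialization J hJ (w ∘ e) hw fun F hF => by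
      rw [← MvPolynomial.aeval_rename] at hF
      simpa only [MvPolynomial.aeval_rename] using hrel _ hF
    refine ⟨w' ∘ e.symm, fun i => by simpa using hw' (e.symm i), fun F hF => ?_⟩
    rw [← MvPolynomial.aeval_rename]
    refine hsp _ ?_
    rw [MvPolynomial.aeval_rename]
    simpa [Function.comp_assoc] using hF

theorem aeval_eq_eval₂_optionEquivLeft (y : Option ι → B) (F : MvPolynomial (Option ι) P) :
    MvPolynomial.aeval y F =
      eval₂ (MvPolynomial.eval₂Hom (algebraMap P B) (y ∘ some)) (y none)
        (MvPolynomial.optionEquivLeft P ι F) := by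
  induction F using MvPolynomial.induction_on with
  | C p => simp [MvPolynomial.optionEquivLeft_C]
  | add F G hF hG => rw [map_add, map_add, eval₂_add, hF, hG]
  | mul_X F i hF =>
    rw [map_mul, map_mul, eval₂_mul, hF]
    cases i <;> simp

theorem IsTougeronDenominator.option_of_transcendental {y : Option ι → B} {δ : MvPolynomial ι P}
    (h : IsTougeronDenominator I (y ∘ some) δ)
    (htr : ∀ F : (MvPolynomial ι P)[X],
      eval₂ (MvPolynomial.eval₂Hom (algebraMap P B) (y ∘ some)) (y none) F = 0 →
        F.map (MvPolynomial.eval₂Hom (algebraMap P B) (y ∘ some)) = 0) :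
    IsTougeronDenominator I y (MvPolynomial.rename some δ) where
  aeval_ne_zero := by rw [MvPolynomial.aeval_rename]; exact h.aeval_ne_zero
  exists_isSpecialization J hJ w hw hrel := by
    rw [MvPolynomial.aeval_rename] at hw
    simp only [MvPolynomial.aeval_rename] at hrel
    obtain ⟨w', hw', hsp⟩ := h.exists_isSpecialization J hJ (w ∘ some) hw fun F hF => by
      rw [← MvPolynomial.aeval_rename] at hF
      simpa only [MvPolynomial.aeval_rename] using hrel _ hF
    refine ⟨fun i => i.elim (w none) w', Option.rec (by simp) hw', fun F hF => ?_⟩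
    rw [aeval_eq_eval₂_optionEquivLeft] at hF ⊢
    rw [eval₂_eq_eval_map]
    convert! eval_zero
    ext k
    rw [coeff_map]
    exact hsp _ (by simpa using! congrArg (coeff · k) (htr _ hF))

theorem IsMinimalRelation.exists_isSpecialization_option [IsDomain H] [HenselianRing H I]
    {y : Option ι → B} {f : (MvPolynomial ι P)[X]}
    (hf : IsMinimalRelation (MvPolynomial.eval₂Hom (algebraMap P B) (y ∘ some)) (y none) f)
    {J : Ideal H} (hJ : J ≤ I) {w₀ w₁ : ι → H} {x₀ l₀ u₀ : H}
    (hl₀ : MvPolynomial.eval₂Hom (algebraMap P H) w₀ f.leadingCoeff = l₀) (hl : l₀ ≠ 0)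
    (hu₀ : eval₂ (MvPolynomial.eval₂Hom (algebraMap P H) w₀) x₀ (derivative f) = u₀)
    (hw : ∀ i, w₁ i - w₀ i ∈ Ideal.span {l₀ * u₀ ^ 2} * J)
    (hx₀ : eval₂ (MvPolynomial.eval₂Hom (algebraMap P H) w₀) x₀ f ∈ Ideal.span {l₀ * u₀ ^ 2} * J)
    (hsp : IsSpecialization P (y ∘ some) w₁) :
    ∃ x, x - x₀ ∈ J ∧ IsSpecialization P y (fun i => i.elim x w₁) := by
  set κ₁ := MvPolynomial.eval₂Hom (algebraMap P H) w₁
  have hκ : ∀ a, κ₁ a - MvPolynomial.eval₂Hom (algebraMap P H) w₀ a ∈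
      Ideal.span {l₀ * u₀ ^ 2} * J := aeval_sub_aeval_mem hw
  obtain ⟨v, hv, hlv⟩ : ∃ v, IsUnit v ∧ κ₁ f.leadingCoeff = l₀ * v :=
    exists_isUnit_eq_mul I hJ (hl₀ ▸ hκ f.leadingCoeff)
  obtain ⟨v', hv', huv⟩ : ∃ v', IsUnit v' ∧ eval₂ κ₁ x₀ (derivative f) = u₀ * v' :=
    exists_isUnit_eq_mul I hJ (c := l₀ * u₀) (by
      rw [show u₀ * (l₀ * u₀) = l₀ * u₀ ^ 2 by ring]
      exact hu₀ ▸ eval₂_sub_eval₂_mem hκ x₀ (derivative f))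
  obtain ⟨j, hj, hfj⟩ : ∃ j ∈ J, l₀ * u₀ ^ 2 * j = eval₂ κ₁ x₀ f := by
    rw [← Ideal.mem_span_singleton_mul]
    simpa using Ideal.add_mem _ (eval₂_sub_eval₂_mem hκ x₀ f) hx₀
  obtain ⟨v'', hv''⟩ := hv'.exists_right_inv
  obtain ⟨x, hx, hfx⟩ := exists_root_sub_mem I hJ (g := f.map κ₁) (x₀ := x₀)
    (J.mul_mem_left (v'' ^ 2 * l₀) hj) (by
      rw [derivative_map, eval_map, eval_map, huv, ← hfj]
      linear_combination (-l₀ * u₀ ^ 2 * j * (v' * v'' + 1)) * hv'')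
  refine ⟨x, hx, fun F hF => ?_⟩
  rw [aeval_eq_eval₂_optionEquivLeft] at hF ⊢
  exact hf.eval₂_eq_zero_of_specialization hsp (hlv ▸ mul_ne_zero hl hv.ne_zero)
    (by rwa [eval_map] at hfx) hF

/-- The Tougeron denominator obtained by adjoining to a tuple with denominator `δ` one further
entry with minimal relation `f`. -/
noncomputable def optionDenominator (δ : MvPolynomial ι P) (f : (MvPolynomial ι P)[X]) :
    MvPolynomial (Option ι) P :=
  MvPolynomial.rename some (δ * f.leadingCoeff) *
    (MvPolynomial.optionEquivLeft P ι).symm (derivative f) ^ 2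

theorem aeval_optionDenominator (w : Option ι → H) (δ : MvPolynomial ι P)
    (f : (MvPolynomial ι P)[X]) : MvPolynomial.aeval w (optionDenominator δ f) =
      MvPolynomial.aeval (w ∘ some) δ * (MvPolynomial.aeval (w ∘ some) f.leadingCoeff *
        eval₂ (MvPolynomial.eval₂Hom (algebraMap P H) (w ∘ some)) (w none) (derivative f) ^ 2) := by
  rw [optionDenominator, map_mul, MvPolynomial.aeval_rename, map_mul, map_pow,
    aeval_eq_eval₂_optionEquivLeft w, AlgEquiv.apply_symm_apply, mul_assoc]

theorem IsTougeronDenominator.option_of_isMinimalRelation [IsDomain B] [CharZero B] [IsDomain H]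
    [HenselianRing H I] {y : Option ι → B} {δ : MvPolynomial ι P}
    (h : IsTougeronDenominator I (y ∘ some) δ) {f : (MvPolynomial ι P)[X]}
    (hf : IsMinimalRelation (MvPolynomial.eval₂Hom (algebraMap P B) (y ∘ some)) (y none) f) :
    IsTougeronDenominator I y (optionDenominator δ f) where
  aeval_ne_zero := by
    rw [aeval_optionDenominator]
    exact mul_ne_zero h.aeval_ne_zero
      (mul_ne_zero hf.map_leadingCoeff_ne_zero (pow_ne_zero 2 hf.eval₂_derivative_ne_zero))
  exists_isSpecialization J hJ w hw hrel := by
    rw [aeval_optionDenominator] at hw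
    set l₀ := MvPolynomial.aeval (w ∘ some) f.leadingCoeff with hl₀
    set u₀ := eval₂ (MvPolynomial.eval₂Hom (algebraMap P H) (w ∘ some)) (w none) (derivative f)
      with hu₀
    rw [aeval_optionDenominator, ← hl₀, ← hu₀, ← Ideal.span_singleton_mul_span_singleton,
      mul_assoc] at hrel
    obtain ⟨w₁, hw₁, hsp⟩ := h.exists_isSpecialization (Ideal.span {l₀ * u₀ ^ 2} * J)
      (Ideal.mul_le_right.trans hJ) (w ∘ some) (left_ne_zero_of_mul hw) fun F hF => by
        rw [← MvPolynomial.aeval_rename] at hF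
        simpa only [MvPolynomial.aeval_rename] using hrel _ hF
    have hx₀ := hrel ((MvPolynomial.optionEquivLeft P ι).symm f) (by
      rw [aeval_eq_eval₂_optionEquivLeft, AlgEquiv.apply_symm_apply, hf.eval₂_eq_zero])
    rw [aeval_eq_eval₂_optionEquivLeft, AlgEquiv.apply_symm_apply] at hx₀
    obtain ⟨x, hx, hspx⟩ := hf.exists_isSpecialization_option hJ hl₀.symm
      (left_ne_zero_of_mul (right_ne_zero_of_mul hw)) hu₀.symm hw₁ (Ideal.mul_le_right hx₀) hsp
    exact ⟨_, Option.rec hx fun i => Ideal.mul_le_right (hw₁ i), hspx⟩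

theorem exists_isTougeronDenominator [IsDomain B] [CharZero B] [IsDomain H] (I : Ideal H)
    [HenselianRing H I] (hker : RingHom.ker (algebraMap P B) ≤ RingHom.ker (algebraMap P H))
    [Finite ι] (y : ι → B) : ∃ δ : MvPolynomial ι P, IsTougeronDenominator I y δ := by
  induction ι using Finite.induction_empty_option with
  | of_equiv e ih =>
    obtain ⟨δ, hδ⟩ := ih (y ∘ e)
    exact ⟨_, hδ.rename_equiv e⟩
  | h_empty => exact ⟨1, isTougeronDenominator_one_of_isEmpty I hker y⟩
  | h_option ih =>
    obtain ⟨δ, hδ⟩ := ih (y ∘ some)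
    by_cases htr : ∀ F, eval₂ (MvPolynomial.eval₂Hom (algebraMap P B) (y ∘ some)) (y none) F = 0 →
        F.map (MvPolynomial.eval₂Hom (algebraMap P B) (y ∘ some)) = 0
    · exact ⟨_, hδ.option_of_transcendental htr⟩
    · push Not at htr
      obtain ⟨F, hF, hF0⟩ := htr
      obtain ⟨f, hf⟩ := exists_isMinimalRelation hF hF0
      exact ⟨_, hδ.option_of_isMinimalRelation hf⟩

end Tougeron

section Weierstrass

universe u

open IsLocalRing
open scoped PowerSeries

/-- `S ⊆ A` approximates `A`-valued tuples: every tuple `a` in `A` has specializations in `S`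
arbitrarily `𝔪`-adically close to `a`. -/
def ApproximationProperty {P : Type*} {A : Type u} [CommRing P] [CommRing A] [IsLocalRing A]
    [Algebra P A] (S : Subalgebra P A) : Prop :=
  ∀ (ι : Type u) [Finite ι] (a : ι → A) (c : ℕ),
    ∃ b : ι → S, (∀ i, (b i : A) - a i ∈ maximalIdeal A ^ c) ∧ IsSpecialization P a b

theorem coe_modByMonic_eq_zero_and_coe_divByMonic_eq {A : Type*} [CommRing A] {I : Ideal A}
    [IsHausdorff I A] {a F : A[X]} (ha : a.IsDistinguishedAt I) (hI : I ≠ ⊤) {z : A⟦X⟧}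
    (h : (F : A⟦X⟧) = a * z) : F %ₘ a = 0 ∧ ((F /ₘ a : A[X]) : A⟦X⟧) = z := by
  have : Nontrivial A := ⟨⟨0, 1, fun h01 => hI ((Ideal.eq_top_iff_one I).mpr (h01 ▸ I.zero_mem))⟩⟩
  have hord : a.natDegree = ((a : A⟦X⟧).map (Ideal.Quotient.mk I)).order.toNat := by
    rw [← ha.coe_natDegree_eq_order_map (a : A⟦X⟧) 1
      (by rwa [PowerSeries.constantCoeff_one, ← Ideal.ne_top_iff_one]) (by simp),
      ENat.toNat_natCast]
  have hdiv : (a : A⟦X⟧) * (F /ₘ a : A[X]) + (F %ₘ a : A[X]) = a * z + (0 : A[X]) := by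
    rw [Polynomial.coe_zero, add_zero, ← h, ← Polynomial.coe_mul, ← Polynomial.coe_add, add_comm,
      modByMonic_add_div]
  obtain ⟨hq, hr⟩ := (ha.isWeierstrassDivisorAt hI).eq_of_mul_add_eq_mul_add
    (by rw [← hord, ← degree_eq_natDegree ha.monic.ne_zero]; exact degree_modByMonic_lt F ha.monic)
    (by rw [degree_zero]; exact WithBot.bot_lt_coe _) hdiv
  exact ⟨hr, hq⟩

section

variable {A : Type*} [CommRing A] [IsLocalRing A]

theorem sub_trunc_mem_maximalIdeal_pow (s : A⟦X⟧) (c : ℕ) :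
    s - (PowerSeries.trunc c s : A[X]) ∈ maximalIdeal A⟦X⟧ ^ c := by
  have hX : (PowerSeries.X : A⟦X⟧) ∈ maximalIdeal A⟦X⟧ := by
    simp [mem_maximalIdeal, PowerSeries.isUnit_iff_constantCoeff]
  refine Ideal.mem_of_dvd _ ?_ (Ideal.pow_mem_pow hX c)
  exact PowerSeries.X_pow_dvd_iff.mpr fun m hm => by simp [PowerSeries.coeff_trunc, hm]

theorem coe_mem_maximalIdeal_pow {c : ℕ} {q : A[X]} (hq : ∀ k, q.coeff k ∈ maximalIdeal A ^ c) :
    (q : A⟦X⟧) ∈ maximalIdeal A⟦X⟧ ^ c := by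
  have hC : (maximalIdeal A).map (PowerSeries.C : A →+* A⟦X⟧) ≤ maximalIdeal A⟦X⟧ :=
    Ideal.map_le_iff_le_comap.mpr fun a ha => by
      simpa [mem_maximalIdeal, PowerSeries.isUnit_iff_constantCoeff] using ha
  rw [q.as_sum_range_C_mul_X_pow, ← coeToPowerSeries.ringHom_apply, map_sum]
  refine Ideal.sum_mem _ fun k _ => ?_
  rw [map_mul, coeToPowerSeries.ringHom_apply, Polynomial.coe_C]
  refine Ideal.mul_mem_right _ _ (Ideal.pow_right_mono hC c ?_)
  rw [← Ideal.map_pow]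
  exact Ideal.mem_map_of_mem _ (hq k)

theorem exists_isDistinguishedAt_mul_and_coe_sub_mem [IsAdicComplete (maximalIdeal A) A]
    {ι : Type*} (y : ι → A⟦X⟧) {g : A⟦X⟧} (hg : g.map (residue A) ≠ 0) (c : ℕ) :
    ∃ a : A[X], a.IsDistinguishedAt (maximalIdeal A) ∧ (∃ u, IsUnit u ∧ g = a * u) ∧
      ∃ z : ι → A[X], ∀ i,
        (z i : A⟦X⟧) - y i ∈ Ideal.span {(a : A⟦X⟧)} * maximalIdeal A⟦X⟧ ^ c := by
  obtain ⟨a, u, hau⟩ := PowerSeries.exists_isWeierstrassFactorization hg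
  have hdiv := hau.isDistinguishedAt.isWeierstrassDivisorAt'
  refine ⟨a, hau.isDistinguishedAt, ⟨u, hau.isUnit, hau.eq_mul⟩,
    fun i => a * PowerSeries.trunc c (hdiv.div (y i)) + hdiv.mod (y i), fun i => ?_⟩
  have hz : ((a * PowerSeries.trunc c (hdiv.div (y i)) + hdiv.mod (y i) : A[X]) : A⟦X⟧) - y i =
      a * -(hdiv.div (y i) - (PowerSeries.trunc c (hdiv.div (y i)) : A[X])) := by
    rw [Polynomial.coe_add, Polynomial.coe_mul]
    linear_combination -(hdiv.isWeierstrassDivisionAt_div_mod (y i)).eq_mul_add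
  rw [hz]
  exact Ideal.mul_mem_mul (Ideal.mem_span_singleton_self _)
    (neg_mem (sub_trunc_mem_maximalIdeal_pow _ c))

end

variable {P : Type*} {A : Type u} [CommRing P] [CommRing A] [Algebra P A] {ι : Type*}

theorem exists_mem_lifts_aeval [Finite ι] (f : ι → A[X]) :
    ∃ s : Finset A, ∀ i, f i ∈ lifts (MvPolynomial.aeval ((↑) : s → A) :
      MvPolynomial s P →ₐ[P] A).toRingHom := by
  classical
  have := Fintype.ofFinite ι
  refine ⟨Finset.univ.biUnion fun i => (f i).coeffs, fun i => ?_⟩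
  refine (lifts_iff_coeff_lifts _).mpr fun k => ?_
  by_cases hk : (f i).coeff k = 0
  · exact ⟨0, by rw [map_zero, hk]⟩
  · exact ⟨MvPolynomial.X ⟨_, Finset.mem_biUnion.mpr ⟨i, Finset.mem_univ i, coeff_mem_coeffs hk⟩⟩,
      MvPolynomial.aeval_X _ _⟩

/-- The value of `F` at a tuple of polynomials over a `P`-algebra. -/
noncomputable def polyEval {Q : Type*} [CommRing Q] [Algebra P Q] (G : ι → Q[X])
    (F : MvPolynomial ι P[X]) : Q[X] :=
  MvPolynomial.eval₂ (mapRingHom (algebraMap P Q)) G F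

theorem algebraMap_mapAlgHom_polyEval {Q T : Type*} [CommRing Q] [Algebra P Q] [CommRing T]
    [Algebra P T] [Algebra T A] [IsScalarTower P T A] (θ : Q →ₐ[P] T) (G : ι → Q[X])
    (F : MvPolynomial ι P[X]) : algebraMap T[X] A⟦X⟧ (mapAlgHom θ (polyEval G F)) =
      MvPolynomial.aeval (fun i => algebraMap T[X] A⟦X⟧ (mapAlgHom θ (G i))) F := by
  have hcomp : ((algebraMap T[X] A⟦X⟧).comp (mapAlgHom θ).toRingHom).comp
      (mapRingHom (algebraMap P Q)) = algebraMap P[X] A⟦X⟧ := by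
    refine RingHom.ext fun p => ?_
    have hp : mapAlgHom θ (p.map (algebraMap P Q)) = p.map (algebraMap P T) := by
      rw [coe_mapAlgHom, Polynomial.map_map, AlgHom.comp_algebraMap_of_tower]
    change algebraMap T[X] A⟦X⟧ (mapAlgHom θ (p.map (algebraMap P Q))) = algebraMap P[X] A⟦X⟧ p
    rw [hp, PowerSeries.algebraMap_apply', PowerSeries.algebraMap_apply',
      ← polynomial_map_coe, ← polynomial_map_coe, Polynomial.map_map, ← IsScalarTower.algebraMap_eq]
  have heval := MvPolynomial.hom_eval₂ F (mapRingHom (algebraMap P Q))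
    ((algebraMap T[X] A⟦X⟧).comp (mapAlgHom θ).toRingHom) G
  rwa [hcomp] at heval

variable {S : Subalgebra P A} {κ : Type*} {β : κ → A} {b : κ → S}

theorem IsSpecialization.mapAlgHom_aeval_eq_zero (hb : IsSpecialization P β b)
    {q : (MvPolynomial κ P)[X]} (hq : mapAlgHom (MvPolynomial.aeval β) q = 0) :
    mapAlgHom (MvPolynomial.aeval b) q = 0 := by
  ext k
  simpa using hb _ (by simpa using congrArg (coeff · k) hq)

variable [IsLocalRing A]

theorem algebraMap_mapAlgHom_aeval_sub_mem {c : ℕ}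
    (hb : ∀ i, (b i : A) - β i ∈ maximalIdeal A ^ c) (q : (MvPolynomial κ P)[X]) :
    algebraMap S[X] A⟦X⟧ (mapAlgHom (MvPolynomial.aeval b) q) -
      (mapAlgHom (MvPolynomial.aeval β) q : A[X]) ∈ maximalIdeal A⟦X⟧ ^ c := by
  rw [PowerSeries.algebraMap_apply', ← polynomial_map_coe, ← Polynomial.coe_sub]
  refine coe_mem_maximalIdeal_pow fun k => ?_
  have := aeval_sub_aeval_mem hb (q.coeff k)
  change MvPolynomial.aeval (algebraMap S A ∘ b) _ - _ ∈ _ at this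
  rw [MvPolynomial.aeval_algebraMap_apply] at this
  simpa using this

theorem mapAlgHom_polyEval_modByMonic_and_divByMonic [IsHausdorff (maximalIdeal A) A]
    {Q : Type*} [CommRing Q] [Algebra P Q] {θ : Q →ₐ[P] A} {D : Q[X]} (hD : D.Monic)
    (hDθ : (mapAlgHom θ D).IsDistinguishedAt (maximalIdeal A)) {G : ι → Q[X]} {y : ι → A⟦X⟧} {c : ℕ}
    (hG : ∀ i, (mapAlgHom θ (G i) : A⟦X⟧) - y i ∈
      Ideal.span {(mapAlgHom θ D : A⟦X⟧)} * maximalIdeal A⟦X⟧ ^ c)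
    {F : MvPolynomial ι P[X]} {t : A⟦X⟧} (hF : MvPolynomial.aeval y F = mapAlgHom θ D * t) :
    mapAlgHom θ (polyEval G F %ₘ D) = 0 ∧
      (mapAlgHom θ (polyEval G F /ₘ D) : A⟦X⟧) - t ∈ maximalIdeal A⟦X⟧ ^ c := by
  obtain ⟨x, hx, hFx⟩ := Ideal.mem_span_singleton_mul.mp (aeval_sub_aeval_mem hG F)
  have heval : (mapAlgHom θ (polyEval G F) : A⟦X⟧) = mapAlgHom θ D * (t + x) := by
    have := algebraMap_mapAlgHom_polyEval (A := A) θ G F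
    simp only [PowerSeries.algebraMap_apply', Algebra.algebraMap_self, PowerSeries.map_id,
      id_eq] at this
    linear_combination this - hFx + hF
  obtain ⟨hr, hq⟩ := coe_modByMonic_eq_zero_and_coe_divByMonic_eq hDθ Ideal.IsPrime.ne_top' heval
  rw [coe_mapAlgHom] at hr hq ⊢
  rw [map_modByMonic _ hD, map_divByMonic _ hD]
  exact ⟨hr, by simpa [hq] using hx⟩

theorem exists_weierstrass_lift [IsAdicComplete (maximalIdeal A) A] [Finite ι] (y : ι → A⟦X⟧)
    {g : A⟦X⟧} (hg : g.map (residue A) ≠ 0) (c : ℕ) :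
    ∃ (s : Finset A) (D : (MvPolynomial s P)[X]) (G : ι → (MvPolynomial s P)[X]),
      D.Monic ∧
      (mapAlgHom (MvPolynomial.aeval ((↑) : s → A)) D).IsDistinguishedAt (maximalIdeal A) ∧
      (∃ u, IsUnit u ∧ g = mapAlgHom (MvPolynomial.aeval ((↑) : s → A)) D * u) ∧
      ∀ i, (mapAlgHom (MvPolynomial.aeval ((↑) : s → A)) (G i) : A⟦X⟧) - y i ∈
        Ideal.span {(mapAlgHom (MvPolynomial.aeval ((↑) : s → A)) D : A⟦X⟧)} *
          maximalIdeal A⟦X⟧ ^ c := by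
  obtain ⟨a, ha, hau, z, hz⟩ := exists_isDistinguishedAt_mul_and_coe_sub_mem y hg c
  obtain ⟨s, hs⟩ := exists_mem_lifts_aeval (P := P) fun o : Option ι => o.elim a z
  obtain ⟨D, rfl, -, hD⟩ := lifts_and_natDegree_eq_and_monic (hs none) ha.monic
  choose G hG using fun i => (mem_lifts _).mp (hs (some i))
  refine ⟨s, D, G, hD, ha, hau, fun i => ?_⟩
  rw [show mapAlgHom (MvPolynomial.aeval ((↑) : s → A)) (G i) = z i from hG i]
  exact hz i

/-- Over the polynomial ring in the coefficients of the Weierstrass divisor and of the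
approximations of `y`, that the remainder of `F` vanishes is a polynomial relation between these
coefficients, so it survives their specialization to `S`. -/
theorem ApproximationProperty.exists_weierstrass_specialization
    [IsAdicComplete (maximalIdeal A) A] (hS : ApproximationProperty S) [Finite ι]
    (y : ι → A⟦X⟧) {δ : MvPolynomial ι P[X]}
    (hδ : (MvPolynomial.aeval y δ).map (residue A) ≠ 0) {c : ℕ} (hc : c ≠ 0) :
    ∃ (w : ι → S[X]) (α v : S[X]), α.Monic ∧ IsUnit (algebraMap S[X] A⟦X⟧ v) ∧
      (∀ i, algebraMap S[X] A⟦X⟧ (w i) - y i ∈ maximalIdeal A⟦X⟧ ^ c) ∧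
      MvPolynomial.aeval (fun i => algebraMap S[X] A⟦X⟧ (w i)) δ = algebraMap S[X] A⟦X⟧ (α * v) ∧
      ∀ F : MvPolynomial ι P[X], MvPolynomial.aeval y F = 0 →
        ∃ h : S[X], algebraMap S[X] A⟦X⟧ h ∈ maximalIdeal A⟦X⟧ ^ c ∧
          MvPolynomial.aeval (fun i => algebraMap S[X] A⟦X⟧ (w i)) F =
            algebraMap S[X] A⟦X⟧ (α * h) := by
  obtain ⟨s, D, G, hD, hDθ, ⟨u, hu, hδu⟩, hG⟩ := exists_weierstrass_lift (P := P) y hδ c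
  obtain ⟨b, hb, hspec⟩ := hS s (↑) c
  set θ : MvPolynomial s P →ₐ[P] A := MvPolynomial.aeval (↑)
  set θ' : MvPolynomial s P →ₐ[P] S := MvPolynomial.aeval b
  have hsub : ∀ q, algebraMap S[X] A⟦X⟧ (mapAlgHom θ' q) - (mapAlgHom θ q : A[X]) ∈
      maximalIdeal A⟦X⟧ ^ c := algebraMap_mapAlgHom_aeval_sub_mem hb
  have hdiv : ∀ {F : MvPolynomial ι P[X]} {t}, MvPolynomial.aeval y F = mapAlgHom θ D * t →
      algebraMap S[X] A⟦X⟧ (mapAlgHom θ' (polyEval G F /ₘ D)) - t ∈ maximalIdeal A⟦X⟧ ^ c ∧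
      MvPolynomial.aeval (fun i => algebraMap S[X] A⟦X⟧ (mapAlgHom θ' (G i))) F =
        algebraMap S[X] A⟦X⟧ (mapAlgHom θ' D * mapAlgHom θ' (polyEval G F /ₘ D)) := by
    intro F t hF
    obtain ⟨hmod, hquot⟩ := mapAlgHom_polyEval_modByMonic_and_divByMonic hD hDθ hG hF
    refine ⟨by simpa only [sub_add_sub_cancel] using add_mem (hsub (polyEval G F /ₘ D)) hquot, ?_⟩
    rw [← algebraMap_mapAlgHom_polyEval, ← map_mul]
    nth_rw 1 [← modByMonic_add_div (polyEval G F) D]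
    rw [map_add, hspec.mapAlgHom_aeval_eq_zero hmod, zero_add]
  refine ⟨fun i => mapAlgHom θ' (G i), mapAlgHom θ' D, mapAlgHom θ' (polyEval G δ /ₘ D),
    hD.map _, ?_, fun i => ?_, (hdiv hδu).2, fun F hF => ?_⟩
  · by_contra hv
    have := sub_mem ((mem_maximalIdeal _).mpr hv) (Ideal.pow_le_self hc (hdiv hδu).1)
    exact (mem_maximalIdeal u).mp (sub_sub_cancel _ u ▸ this) hu
  · simpa only [sub_add_sub_cancel] using add_mem (hsub (G i)) (Ideal.mul_le_right (hG i))
  · obtain ⟨hmem, heval⟩ := hdiv (t := 0) (hF.trans (mul_zero _).symm)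
    exact ⟨_, sub_zero (algebraMap S[X] A⟦X⟧ _) ▸ hmem, heval⟩

end Weierstrass

end PolynomialAlgebra

section MvPowerSeries

open IsLocalRing MvPowerSeries

theorem exists_forall_sub_mem_pow {R : Type*} [CommRing R] {I : Ideal R} [IsPrecomplete I R]
    {f : ℕ → R} (hf : ∀ d e, d ≤ e → f d - f e ∈ I ^ d) : ∃ t, ∀ d, f d - t ∈ I ^ d := by
  obtain ⟨t, ht⟩ := IsPrecomplete.prec' (I := I) f fun {d e} hde => by
    simpa [SModEq.sub_mem] using hf d e hde
  exact ⟨t, fun d => by simpa [SModEq.sub_mem] using ht d⟩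

variable {σ k : Type*} [Field k]

theorem mvPolynomial_coe_sub (p q : MvPolynomial σ k) :
    ((p - q : MvPolynomial σ k) : MvPowerSeries σ k) = p - q :=
  map_sub MvPolynomial.coeToMvPowerSeries.ringHom p q

theorem mem_maximalIdeal_iff_constantCoeff_eq_zero {s : MvPowerSeries σ k} :
    s ∈ maximalIdeal (MvPowerSeries σ k) ↔ constantCoeff s = 0 := by
  simp [isUnit_iff_constantCoeff]

theorem natCast_le_order_of_mem_maximalIdeal_pow {d : ℕ} {s : MvPowerSeries σ k}
    (hs : s ∈ maximalIdeal (MvPowerSeries σ k) ^ d) : (d : ℕ∞) ≤ s.order := by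
  induction d generalizing s with
  | zero => simp
  | succ d ih =>
    rw [pow_succ] at hs
    induction hs using Submodule.mul_induction_on' with
    | mem_mul_mem a ha b hb =>
      have hb' : 1 ≤ b.order := by
        rwa [one_le_order_iff_constCoeff_eq_zero, ← mem_maximalIdeal_iff_constantCoeff_eq_zero]
      exact_mod_cast (add_le_add (ih ha) hb').trans le_order_mul
    | add a _ b _ ha hb => exact (le_min ha hb).trans min_order_le_add

theorem eq_zero_of_forall_mem_maximalIdeal_pow {s : MvPowerSeries σ k}
    (hs : ∀ d, s ∈ maximalIdeal (MvPowerSeries σ k) ^ d) : s = 0 := by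
  rw [← order_eq_top_iff, ENat.eq_top_iff_forall_ge]
  exact fun d => natCast_le_order_of_mem_maximalIdeal_pow (hs d)

theorem span_range_X_le_maximalIdeal :
    Ideal.span (Set.range X) ≤ maximalIdeal (MvPowerSeries σ k) := by
  rw [Ideal.span_le]
  rintro _ ⟨i, rfl⟩
  exact mem_maximalIdeal_iff_constantCoeff_eq_zero.mpr (constantCoeff_X i)

theorem coe_mem_span_range_X_pow {d : ℕ} {p : MvPolynomial σ k}
    (hp : p ∈ MvPolynomial.idealOfVars σ k ^ d) :
    (p : MvPowerSeries σ k) ∈ Ideal.span (Set.range X) ^ d := by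
  have := Ideal.mem_map_of_mem MvPolynomial.coeToMvPowerSeries.ringHom hp
  simpa [MvPolynomial.idealOfVars, Ideal.map_pow, Ideal.map_span, ← Set.range_comp,
    Function.comp_def] using this

variable [Finite σ]

theorem sub_truncTotal_mem_span_range_X_pow (s : MvPowerSeries σ k) (d : ℕ) :
    s - truncTotal d s ∈ Ideal.span (Set.range X) ^ d := by
  obtain ⟨t, ht⟩ := exists_forall_sub_mem_pow (I := Ideal.span (Set.range X))
    (f := fun d => (truncTotal d s : MvPowerSeries σ k)) fun d e hde => by
      simpa only [mvPolynomial_coe_sub] using coe_mem_span_range_X_pow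
        (truncTotal_sub_truncTotal_mem_pow_idealOfVars le_rfl hde s)
  suffices hts : t = s by simpa [hts] using neg_mem (ht d)
  ext e
  have hle := natCast_le_order_of_mem_maximalIdeal_pow
    (Ideal.pow_right_mono span_range_X_le_maximalIdeal _ (ht (e.degree + 1)))
  have := coeff_of_lt_order ((Nat.cast_lt.mpr e.degree.lt_succ_self).trans_le hle)
  rw [map_sub, MvPolynomial.coeff_coe, coeff_truncTotal _ e.degree.lt_succ_self] at this
  exact (sub_eq_zero.mp this).symm

theorem mem_span_range_X_pow_of_natCast_le_order {d : ℕ} {s : MvPowerSeries σ k}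
    (hs : (d : ℕ∞) ≤ s.order) : s ∈ Ideal.span (Set.range X) ^ d := by
  have htrunc : truncTotal d s = 0 := by
    ext e
    rcases lt_or_ge e.degree d with he | he
    · rw [coeff_truncTotal _ he, coeff_of_lt_order ((Nat.cast_lt.mpr he).trans_le hs),
        MvPolynomial.coeff_zero]
    · rw [coeff_truncTotal_eq_zero _ he, MvPolynomial.coeff_zero]
  simpa [htrunc] using sub_truncTotal_mem_span_range_X_pow s d

variable (σ k) in
theorem maximalIdeal_eq_span_range_X :
    maximalIdeal (MvPowerSeries σ k) = Ideal.span (Set.range X) := by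
  refine le_antisymm (fun s hs => ?_) span_range_X_le_maximalIdeal
  rw [← pow_one (Ideal.span _)]
  exact mem_span_range_X_pow_of_natCast_le_order
    (natCast_le_order_of_mem_maximalIdeal_pow (by rwa [pow_one]))

theorem coe_mem_maximalIdeal_pow_iff {d : ℕ} {p : MvPolynomial σ k} :
    (p : MvPowerSeries σ k) ∈ maximalIdeal (MvPowerSeries σ k) ^ d ↔
      p ∈ MvPolynomial.idealOfVars σ k ^ d := by
  refine ⟨fun hp => ?_, fun hp => ?_⟩
  · rw [MvPolynomial.mem_pow_idealOfVars_iff']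
    intro e he
    simpa using coeff_of_lt_order ((Nat.cast_lt.mpr he).trans_le
      (natCast_le_order_of_mem_maximalIdeal_pow hp))
  · exact maximalIdeal_eq_span_range_X σ k ▸ coe_mem_span_range_X_pow hp

instance : IsAdicComplete (maximalIdeal (MvPowerSeries σ k)) (MvPowerSeries σ k) := by
  rw [maximalIdeal_eq_span_range_X]
  infer_instance

end MvPowerSeries

section PolynomialAsymptotics

open Asymptotics MvPolynomial

theorem aeval_mul_eq_of_isHomogeneous {σ R A : Type*} [CommSemiring R] [CommSemiring A]
    [Algebra R A] {p : MvPolynomial σ R} {d : ℕ} (hp : p.IsHomogeneous d) (t : A) (y : σ → A) :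
    aeval (fun i => t * y i) p = t ^ d * aeval y p := by
  rw [aeval_def, aeval_def, eval₂_eq, eval₂_eq, Finset.mul_sum]
  refine Finset.sum_congr rfl fun e he => ?_
  have hdeg : ∑ i ∈ e.support, e i = d := (hp.degree_eq_sum_deg_support he).symm
  rw [← hdeg, ← Finset.prod_pow_eq_pow_sum]
  simp only [mul_pow, Finset.prod_mul_distrib]
  ring

variable {σ : Type*}

theorem eval_isBigO_one (p : MvPolynomial σ ℝ) :
    (fun x => eval x p) =O[𝓝 0] fun _ => (1 : ℝ) :=
  (continuous_eval p).continuousAt.norm.isBoundedUnder_le.isBigO_one ℝ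

theorem norm_pow_isBigO_norm_pow {E : Type*} [NormedAddCommGroup E] {d e : ℕ} (hde : d ≤ e) :
    (fun x : E => ‖x‖ ^ e) =O[𝓝 0] fun x => ‖x‖ ^ d :=
  hde.eq_or_lt.elim (fun h => h ▸ isBigO_refl _ _) fun h => (isLittleO_norm_pow_norm_pow h).isBigO

variable [Fintype σ]

theorem eval_isBigO_of_mem_pow_idealOfVars {d : ℕ} {p : MvPolynomial σ ℝ}
    (hp : p ∈ idealOfVars σ ℝ ^ d) :
    (fun x => eval x p) =O[𝓝 0] fun x => ‖x‖ ^ d := by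
  rw [mem_pow_idealOfVars_iff] at hp
  simp only [eval_eq]
  refine .fun_sum fun e he => .const_mul_left (.trans ?_ (norm_pow_isBigO_norm_pow (hp e he))) _
  refine .of_norm_le fun x => ?_
  rw [norm_prod, Finsupp.degree_apply, ← Finset.prod_pow_eq_pow_sum]
  exact Finset.prod_le_prod (fun _ _ => norm_nonneg _) fun i _ => by
    rw [norm_pow]
    gcongr
    exact norm_le_pi_norm x i

theorem eq_zero_of_isHomogeneous_of_eval_isBigO {d : ℕ} {p : MvPolynomial σ ℝ}
    (hp : p.IsHomogeneous d) (hO : (fun x => eval x p) =O[𝓝 0] fun x => ‖x‖ ^ (d + 1)) :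
    p = 0 := by
  refine MvPolynomial.funext fun x => ?_
  have htendsto : Filter.Tendsto (fun t : ℝ => t • x) (𝓝 0) (𝓝 0) :=
    Continuous.tendsto' (by fun_prop) _ _ (zero_smul ℝ x)
  have hline : (fun t : ℝ => t ^ d * eval x p) =O[𝓝 0] fun t => t ^ (d + 1) := by
    refine ((hO.comp_tendsto htendsto).congr_left fun t => ?_).trans ?_
    · exact aeval_mul_eq_of_isHomogeneous hp t x
    · refine .of_bound (‖x‖ ^ (d + 1)) (.of_forall fun t => ?_)
      simp [norm_smul, mul_pow, mul_comm]
  by_contra hx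
  have hlittleO : (fun t : ℝ => t ^ d) =o[𝓝 0] fun t => t ^ d := by
    rw [← isLittleO_const_mul_left_iff hx]
    simpa only [mul_comm] using hline.trans_isLittleO (isLittleO_pow_pow d.lt_succ_self)
  have hne : ∃ᶠ t in 𝓝 (0 : ℝ), t ^ d ≠ 0 :=
    (eventually_mem_nhdsWithin (a := (0 : ℝ)) (s := {0}ᶜ)).frequently.filter_mono
      nhdsWithin_le_nhds |>.mono fun t ht => pow_ne_zero d ht
  exact isLittleO_irrefl hne hlittleO

theorem mem_pow_idealOfVars_of_eval_isBigO {d : ℕ} {p : MvPolynomial σ ℝ}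
    (hO : (fun x => eval x p) =O[𝓝 0] fun x => ‖x‖ ^ d) : p ∈ idealOfVars σ ℝ ^ d := by
  induction d with
  | zero => simp
  | succ d ih =>
    have hp := ih (hO.trans (norm_pow_isBigO_norm_pow d.le_succ))
    have hrest : p - homogeneousComponent d p ∈ idealOfVars σ ℝ ^ (d + 1) := by
      rw [mem_pow_idealOfVars_iff'] at hp ⊢
      intro e he
      rw [coeff_sub, coeff_homogeneousComponent]
      split_ifs with hed
      · exact sub_self _
      · rw [hp e (by omega), sub_zero]
    have hzero : homogeneousComponent d p = 0 := by
      refine eq_zero_of_isHomogeneous_of_eval_isBigO (homogeneousComponent_isHomogeneous d p) ?_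
      simpa using hO.sub (eval_isBigO_of_mem_pow_idealOfVars hrest)
    simpa [hzero] using hrest

end PolynomialAsymptotics

section TaylorSeries

open Asymptotics IsLocalRing MvPowerSeries

variable {σ : Type*} [Fintype σ]

theorem multilinear_apply_diag_eq_zero_of_isBigO {E F : Type*} [NormedAddCommGroup E]
    [NormedSpace ℝ E] [NormedAddCommGroup F] [NormedSpace ℝ F] {f : E → F}
    {p : FormalMultilinearSeries ℝ E F} (hp : HasFPowerSeriesAt f p 0) {c : ℕ}
    (hf : f =O[𝓝 0] fun x => ‖x‖ ^ c) {k : ℕ} (hk : k < c) (y : E) : p k (fun _ => y) = 0 := by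
  induction k using Nat.strong_induction_on generalizing y with
  | _ k ih =>
    have hsum : ∀ x, p.partialSum (k + 1) x = p k fun _ => x := fun x => by
      rw [FormalMultilinearSeries.partialSum, Finset.sum_range_succ, Finset.sum_eq_zero, zero_add]
      intro j hj
      exact ih j (Finset.mem_range.mp hj) ((Finset.mem_range.mp hj).trans hk) x
    have hf' : f =O[𝓝 0] fun x => ‖x‖ ^ (k + 1) := hf.trans (norm_pow_isBigO_norm_pow hk)
    have hO := hf'.sub (by simpa only [zero_add] using hp.isBigO_sub_partialSum_pow (k + 1))
    simp only [sub_sub_cancel, hsum] at hO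
    exact hO.continuousMultilinearMap_apply_eq_zero y

theorem eventually_eq_zero_of_forall_isBigO {E F : Type*} [NormedAddCommGroup E]
    [NormedSpace ℝ E] [NormedAddCommGroup F] [NormedSpace ℝ F] {f : E → F}
    (hf : AnalyticAt ℝ f 0) (hO : ∀ c, f =O[𝓝 0] fun x => ‖x‖ ^ c) : f =ᶠ[𝓝 0] 0 := by
  obtain ⟨p, hp⟩ := hf
  filter_upwards [hp.eventually_hasSum] with y hy
  simp only [zero_add, fun k =>
    multilinear_apply_diag_eq_zero_of_isBigO hp (hO (k + 1)) k.lt_succ_self y] at hy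
  exact hy.unique hasSum_zero

theorem exists_mvPolynomial_eval_eq_multilinear_diag {σ : Type*} [Finite σ] {k : ℕ}
    (p : ContinuousMultilinearMap ℝ (fun _ : Fin k => σ → ℝ) ℝ) :
    ∃ q : MvPolynomial σ ℝ, ∀ x, MvPolynomial.eval x q = p fun _ => x := by
  classical
  have := Fintype.ofFinite σ
  refine ⟨∑ r : Fin k → σ, MvPolynomial.C (p fun i => Pi.single (r i) 1) *
    ∏ i, MvPolynomial.X (r i), fun x => ?_⟩
  have hx : x = ∑ i, x i • (Pi.single i 1 : σ → ℝ) := by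
    ext j
    simp [Finset.sum_apply, Pi.single_apply]
  conv_rhs => rw [hx, p.map_sum]
  simp only [map_sum, map_mul, MvPolynomial.eval_C, map_prod, MvPolynomial.eval_X]
  refine Finset.sum_congr rfl fun r _ => ?_
  rw [p.map_smul_univ (fun i => x (r i)) fun i => Pi.single (r i) 1, smul_eq_mul, mul_comm]

/-- The germ at `0` of the function `f` is analytic, with Taylor expansion the formal power
series `s`. The expansion is expressed through the remainders of the Taylor polynomials. -/
def HasTaylorSeries (f : (σ → ℝ) → ℝ) (s : MvPowerSeries σ ℝ) : Prop :=
  AnalyticAt ℝ f 0 ∧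
    ∀ k, (fun x => f x - MvPolynomial.eval x (truncTotal k s)) =O[𝓝 0] fun x => ‖x‖ ^ k

theorem sub_coe_mem_iff_eval_isBigO {s : MvPowerSeries σ ℝ} {p : MvPolynomial σ ℝ} {k : ℕ} :
    s - p ∈ maximalIdeal (MvPowerSeries σ ℝ) ^ k ↔
      (fun x => MvPolynomial.eval x (truncTotal k s) - MvPolynomial.eval x p) =O[𝓝 0]
        fun x => ‖x‖ ^ k := by
  have htrunc : s - truncTotal k s ∈ maximalIdeal (MvPowerSeries σ ℝ) ^ k :=
    maximalIdeal_eq_span_range_X σ ℝ ▸ sub_truncTotal_mem_span_range_X_pow s k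
  have hsplit : s - (p : MvPowerSeries σ ℝ) =
      (s - truncTotal k s) + ((truncTotal k s - p : MvPolynomial σ ℝ) : MvPowerSeries σ ℝ) := by
    rw [mvPolynomial_coe_sub, sub_add_sub_cancel]
  rw [hsplit, Ideal.add_mem_iff_right _ htrunc, coe_mem_maximalIdeal_pow_iff]
  simp only [← map_sub]
  exact ⟨eval_isBigO_of_mem_pow_idealOfVars, mem_pow_idealOfVars_of_eval_isBigO⟩

theorem HasTaylorSeries.sub_coe_mem_iff {f : (σ → ℝ) → ℝ} {s : MvPowerSeries σ ℝ}
    (hf : HasTaylorSeries f s) {p : MvPolynomial σ ℝ} {k : ℕ} :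
    s - p ∈ maximalIdeal (MvPowerSeries σ ℝ) ^ k ↔
      (fun x => f x - MvPolynomial.eval x p) =O[𝓝 0] fun x => ‖x‖ ^ k := by
  rw [sub_coe_mem_iff_eval_isBigO]
  refine ⟨fun h => ((hf.2 k).add h).congr_left fun x => by ring,
    fun h => (h.sub (hf.2 k)).congr_left fun x => by ring⟩

theorem hasTaylorSeries_of_forall_exists {f : (σ → ℝ) → ℝ} {s : MvPowerSeries σ ℝ}
    (hf : AnalyticAt ℝ f 0)
    (h : ∀ k, ∃ p : MvPolynomial σ ℝ, s - p ∈ maximalIdeal (MvPowerSeries σ ℝ) ^ k ∧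
      (fun x => f x - MvPolynomial.eval x p) =O[𝓝 0] fun x => ‖x‖ ^ k) :
    HasTaylorSeries f s := by
  refine ⟨hf, fun k => ?_⟩
  obtain ⟨p, hs, hp⟩ := h k
  exact (hp.sub (sub_coe_mem_iff_eval_isBigO.mp hs)).congr_left fun x => by ring

theorem hasTaylorSeries_eval (p : MvPolynomial σ ℝ) :
    HasTaylorSeries (fun x => MvPolynomial.eval x p) p := by
  refine hasTaylorSeries_of_forall_exists ?_ fun k => ⟨p, by simp, by simpa using isBigO_zero _ _⟩
  simpa [MvPolynomial.aeval_eq_eval] using AnalyticAt.aeval_mvPolynomial (𝕜 := ℝ)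
    (f := fun (x : σ → ℝ) i => x i) (z := 0)
    (fun i => (ContinuousLinearMap.proj (R := ℝ) (φ := fun _ : σ => ℝ) i).analyticAt 0) p

theorem exists_hasTaylorSeries {f : (σ → ℝ) → ℝ} (hf : AnalyticAt ℝ f 0) :
    ∃ s, HasTaylorSeries f s := by
  obtain ⟨p, hp⟩ := id hf
  choose π hπ using fun k => exists_mvPolynomial_eval_eq_multilinear_diag (p k)
  let q (k : ℕ) : MvPolynomial σ ℝ := ∑ j ∈ Finset.range k, π j
  have hq (k : ℕ) : (fun x => f x - MvPolynomial.eval x (q k)) =O[𝓝 0] fun x => ‖x‖ ^ k :=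
    (hp.isBigO_sub_partialSum_pow k).congr_left fun x => by
      simp [q, FormalMultilinearSeries.partialSum, hπ]
  obtain ⟨s, hs⟩ := exists_forall_sub_mem_pow (I := maximalIdeal (MvPowerSeries σ ℝ))
    (f := fun k => (q k : MvPowerSeries σ ℝ)) fun d e hde => by
      rw [← mvPolynomial_coe_sub, coe_mem_maximalIdeal_pow_iff]
      refine mem_pow_idealOfVars_of_eval_isBigO ?_
      refine (((hq e).trans (norm_pow_isBigO_norm_pow hde)).sub (hq d)).congr_left fun x => ?_
      rw [map_sub]
      ring
  exact ⟨s, hasTaylorSeries_of_forall_exists hf fun k =>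
    ⟨q k, by simpa only [neg_sub] using neg_mem (hs k), hq k⟩⟩

namespace HasTaylorSeries

variable {f g : (σ → ℝ) → ℝ} {s t : MvPowerSeries σ ℝ}

theorem congr (hf : HasTaylorSeries f s) (hfg : f =ᶠ[𝓝 0] g) : HasTaylorSeries g s :=
  ⟨hf.1.congr hfg, fun k => (hf.2 k).congr' (hfg.sub .rfl) .rfl⟩

theorem mem_maximalIdeal_pow_iff (hf : HasTaylorSeries f s) {k : ℕ} :
    s ∈ maximalIdeal (MvPowerSeries σ ℝ) ^ k ↔ f =O[𝓝 0] fun x => ‖x‖ ^ k := by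
  simpa using hf.sub_coe_mem_iff (p := 0) (k := k)

theorem eq_zero_iff (hf : HasTaylorSeries f s) : s = 0 ↔ f =ᶠ[𝓝 0] 0 := by
  refine ⟨fun hs => eventually_eq_zero_of_forall_isBigO hf.1 fun c =>
    hf.mem_maximalIdeal_pow_iff.mp (hs ▸ zero_mem _), fun h =>
    eq_zero_of_forall_mem_maximalIdeal_pow fun k => hf.mem_maximalIdeal_pow_iff.mpr ?_⟩
  exact h.trans_isBigO (isBigO_zero _ _)

theorem constantCoeff_eq (hf : HasTaylorSeries f s) : constantCoeff s = f 0 := by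
  have h0 : f 0 - MvPolynomial.eval 0 (truncTotal 1 s) = 0 :=
    (hf.2 1).eq_zero_imp.self_of_nhds (by simp)
  rw [sub_eq_zero.mp h0, MvPolynomial.eval_zero, MvPolynomial.constantCoeff_eq,
    coeff_truncTotal _ (by simp), coeff_zero_eq_constantCoeff_apply]

theorem add (hf : HasTaylorSeries f s) (hg : HasTaylorSeries g t) :
    HasTaylorSeries (f + g) (s + t) := by
  refine hasTaylorSeries_of_forall_exists (hf.1.add hg.1) fun k =>
    ⟨truncTotal k s + truncTotal k t, ?_, ?_⟩
  · rw [MvPolynomial.coe_add, add_sub_add_comm]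
    exact add_mem (hf.sub_coe_mem_iff.mpr (hf.2 k)) (hg.sub_coe_mem_iff.mpr (hg.2 k))
  · refine ((hf.2 k).add (hg.2 k)).congr_left fun x => ?_
    rw [Pi.add_apply, map_add]
    ring

theorem mul (hf : HasTaylorSeries f s) (hg : HasTaylorSeries g t) :
    HasTaylorSeries (f * g) (s * t) := by
  refine hasTaylorSeries_of_forall_exists (hf.1.mul hg.1) fun k =>
    ⟨truncTotal k s * truncTotal k t, ?_, ?_⟩
  · have hsplit : s * t - (truncTotal k s * truncTotal k t : MvPolynomial σ ℝ) =
        (s - truncTotal k s) * t + truncTotal k s * (t - truncTotal k t) := by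
      rw [MvPolynomial.coe_mul]
      ring
    rw [hsplit]
    exact add_mem (Ideal.mul_mem_right _ _ (hf.sub_coe_mem_iff.mpr (hf.2 k)))
      (Ideal.mul_mem_left _ _ (hg.sub_coe_mem_iff.mpr (hg.2 k)))
  · have hg1 : g =O[𝓝 0] fun _ => (1 : ℝ) :=
      hg.1.continuousAt.norm.isBoundedUnder_le.isBigO_one ℝ
    have hfg := (hf.2 k).mul hg1
    have hgf := (eval_isBigO_one (truncTotal k s)).mul (hg.2 k)
    simp only [mul_one, one_mul] at hfg hgf
    refine (hfg.add hgf).congr_left fun x => ?_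
    rw [Pi.mul_apply, map_mul]
    ring

end HasTaylorSeries

variable (σ) in
/-- The algebra of pairs consisting of an analytic germ and its Taylor series; membership
propagates Taylor expansions through polynomial expressions. -/
def taylorPairs : Subalgebra ℝ (((σ → ℝ) → ℝ) × MvPowerSeries σ ℝ) where
  carrier := {z | HasTaylorSeries z.1 z.2}
  mul_mem' hf hg := hf.mul hg
  add_mem' hf hg := hf.add hg
  algebraMap_mem' r := by simpa using! hasTaylorSeries_eval (MvPolynomial.C r)

namespace HasTaylorSeries

variable {f g : (σ → ℝ) → ℝ} {s t : MvPowerSeries σ ℝ}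

theorem sub (hf : HasTaylorSeries f s) (hg : HasTaylorSeries g t) :
    HasTaylorSeries (f - g) (s - t) :=
  (taylorPairs σ).sub_mem (x := (f, s)) (y := (g, t)) hf hg

theorem eq_iff (hf : HasTaylorSeries f s) (hg : HasTaylorSeries g t) :
    s = t ↔ f =ᶠ[𝓝 0] g := by
  rw [← sub_eq_zero, (hf.sub hg).eq_zero_iff]
  exact Filter.eventually_congr (.of_forall fun x => sub_eq_zero)

theorem sum_mul_pow {g : ℕ → (σ → ℝ) → ℝ} {F : Polynomial (MvPowerSeries σ ℝ)}
    (hg : ∀ i, HasTaylorSeries (g i) (F.coeff i)) (hf : HasTaylorSeries f s) :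
    HasTaylorSeries (fun x => ∑ i ∈ Finset.range (F.natDegree + 1), g i x * f x ^ i)
      (F.eval s) := by
  have hmem : (∑ i ∈ Finset.range (F.natDegree + 1), (g i, F.coeff i) * (f, s) ^ i) ∈
      taylorPairs σ :=
    sum_mem fun i _ => mul_mem (hg i) ((taylorPairs σ).pow_mem (x := (f, s)) hf i)
  have hfst : (∑ i ∈ Finset.range (F.natDegree + 1), (g i, F.coeff i) * (f, s) ^ i).1 =
      fun x => ∑ i ∈ Finset.range (F.natDegree + 1), g i x * f x ^ i := by
    ext x
    simp [Prod.fst_sum]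
  have hsnd : (∑ i ∈ Finset.range (F.natDegree + 1), (g i, F.coeff i) * (f, s) ^ i).2 =
      F.eval s := by
    simp [Prod.snd_sum, Polynomial.eval_eq_sum_range]
  exact hfst ▸ hsnd ▸ hmem

end HasTaylorSeries

end TaylorSeries

section Substitution

open Asymptotics IsLocalRing MvPowerSeries

theorem algHom_coe_eq_aeval {τ k B : Type*} [Field k] [CommRing B] [Algebra k B]
    (Φ : MvPowerSeries τ k →ₐ[k] B) (p : MvPolynomial τ k) :
    Φ p = MvPolynomial.aeval (fun i => Φ (X i)) p := by
  have hext : Φ.comp (MvPolynomial.coeToMvPowerSeries.algHom k) =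
      MvPolynomial.aeval fun i => Φ (X i) := MvPolynomial.algHom_ext fun i => by simp
  simpa using DFunLike.congr_fun hext p

theorem algHom_mem_pow_of_mem_maximalIdeal_pow {τ k B : Type*} [Finite τ] [Field k] [CommRing B]
    [Algebra k B] (Φ : MvPowerSeries τ k →ₐ[k] B) {I : Ideal B} (hΦ : ∀ i, Φ (X i) ∈ I) {d : ℕ}
    {s : MvPowerSeries τ k} (hs : s ∈ maximalIdeal (MvPowerSeries τ k) ^ d) : Φ s ∈ I ^ d := by
  have hmap := Ideal.mem_map_of_mem Φ hs
  rw [Ideal.map_pow, maximalIdeal_eq_span_range_X, Ideal.map_span] at hmap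
  refine Ideal.pow_right_mono (Ideal.span_le.mpr ?_) d hmap
  rintro _ ⟨_, ⟨i, rfl⟩, rfl⟩
  exact hΦ i

variable {σ τ : Type*}
  (Φ : MvPowerSeries τ ℝ →ₐ[ℝ] MvPowerSeries σ ℝ) {ℓ : τ → MvPolynomial σ ℝ}

theorem algHom_coe_eq_coe_aeval (hΦ : ∀ i, Φ (X i) = ℓ i) (p : MvPolynomial τ ℝ) :
    Φ p = (MvPolynomial.aeval ℓ p : MvPolynomial σ ℝ) := by
  rw [algHom_coe_eq_aeval, funext hΦ]
  exact (MvPolynomial.comp_aeval_apply ℓ (MvPolynomial.coeToMvPowerSeries.algHom ℝ) p).symm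

variable [Fintype σ] [Fintype τ]

theorem HasTaylorSeries.comp_algHom (hΦ : ∀ i, Φ (X i) = ℓ i)
    (hℓ : ∀ i, (ℓ i).constantCoeff = 0) {f : (τ → ℝ) → ℝ} {s : MvPowerSeries τ ℝ}
    (hf : HasTaylorSeries f s) :
    HasTaylorSeries (fun x => f fun i => MvPolynomial.eval x (ℓ i)) (Φ s) := by
  have hmem (i : τ) : (ℓ i : MvPowerSeries σ ℝ) ∈ maximalIdeal (MvPowerSeries σ ℝ) :=
    mem_maximalIdeal_iff_constantCoeff_eq_zero.mpr ((MvPolynomial.coeff_coe (ℓ i) 0).trans (hℓ i))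
  have h0 : (fun i => MvPolynomial.eval (0 : σ → ℝ) (ℓ i)) = 0 := funext fun i => by
    rw [MvPolynomial.eval_zero, hℓ, Pi.zero_apply]
  have hO : (fun (x : σ → ℝ) i => MvPolynomial.eval x (ℓ i)) =O[𝓝 0] fun x => ‖x‖ :=
    isBigO_pi.mpr fun i => by
      simpa using (hasTaylorSeries_eval (ℓ i)).mem_maximalIdeal_pow_iff (k := 1) |>.mp
        (by simpa using hmem i)
  have hcont : Filter.Tendsto (fun (x : σ → ℝ) i => MvPolynomial.eval x (ℓ i)) (𝓝 0) (𝓝 0) :=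
    (continuous_pi fun i => MvPolynomial.continuous_eval (ℓ i)).tendsto' _ _ h0
  refine hasTaylorSeries_of_forall_exists ?_ fun k =>
    ⟨MvPolynomial.aeval ℓ (truncTotal k s), ?_, ?_⟩
  · exact AnalyticAt.fun_comp (by rw [h0]; exact hf.1)
      (analyticAt_pi_iff.mpr fun i => (hasTaylorSeries_eval (ℓ i)).1)
  · rw [← algHom_coe_eq_coe_aeval Φ hΦ, ← map_sub]
    exact algHom_mem_pow_of_mem_maximalIdeal_pow Φ (fun i => by rw [hΦ]; exact hmem i)
      (hf.sub_coe_mem_iff.mpr (hf.2 k))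
  · refine (((hf.2 k).comp_tendsto hcont).trans (hO.norm_left.pow k)).congr_left fun x => ?_
    rw [Function.comp_apply, ← MvPolynomial.aeval_eq_eval x]
    exact congrArg _ (MvPolynomial.comp_aeval_apply ℓ (MvPolynomial.aeval x) _).symm

end Substitution

section NashSeries

open IsLocalRing MvPowerSeries

instance {σ k : Type*} [Field k] : IsDomain (MvPowerSeries σ k) :=
  NoZeroDivisors.to_isDomain _

instance {σ k : Type*} [Field k] [CharZero k] : CharZero (MvPowerSeries σ k) :=
  charZero_of_injective_algebraMap (algebraMap k _).injective

instance {σ R : Type*} [CommRing R] : FaithfulSMul (MvPolynomial σ R) (MvPowerSeries σ R) :=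
  (faithfulSMul_iff_algebraMap_injective _ _).mpr fun p q h =>
    MvPolynomial.coe_injective _ _ (by simpa [MvPowerSeries.algebraMap_apply'] using h)

variable {σ : Type*} [Fintype σ]

variable (σ) in
/-- The ring of Nash germs in the variables `σ`: the convergent power series that are algebraic
over the polynomials. -/
def nashSeries : Subalgebra (MvPolynomial σ ℝ) (MvPowerSeries σ ℝ) where
  carrier := {s | (∃ f, HasTaylorSeries f s) ∧ IsAlgebraic (MvPolynomial σ ℝ) s}
  mul_mem' := fun ⟨⟨_, hf⟩, hs⟩ ⟨⟨_, hg⟩, ht⟩ => ⟨⟨_, hf.mul hg⟩, hs.mul ht⟩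
  add_mem' := fun ⟨⟨_, hf⟩, hs⟩ ⟨⟨_, hg⟩, ht⟩ => ⟨⟨_, hf.add hg⟩, hs.add ht⟩
  algebraMap_mem' p := ⟨⟨_, by simpa [algebraMap_apply'] using! hasTaylorSeries_eval p⟩,
    isAlgebraic_algebraMap p⟩

noncomputable instance : Algebra (MvPolynomial σ ℝ) (nashSeries σ) :=
  (nashSeries σ).algebra

theorem mem_nashSeries_of_isAlgebraic {f : (σ → ℝ) → ℝ} {s : MvPowerSeries σ ℝ}
    (hf : HasTaylorSeries f s) (hs : IsAlgebraic (nashSeries σ) s) : s ∈ nashSeries σ := by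
  have : Algebra.IsAlgebraic (MvPolynomial σ ℝ) (nashSeries σ) :=
    ⟨fun t => (isAlgebraic_algebraMap_iff Subtype.val_injective).mp t.2.2⟩
  exact ⟨⟨f, hf⟩, hs.restrictScalars _⟩

theorem coe_mem_nashSeries (p : MvPolynomial σ ℝ) : (p : MvPowerSeries σ ℝ) ∈ nashSeries σ := by
  simpa [algebraMap_apply'] using (nashSeries σ).algebraMap_mem p

theorem mem_nashSeries_of_algHom {τ : Type*} [Fintype τ]
    (Φ : MvPowerSeries τ ℝ →ₐ[ℝ] MvPowerSeries σ ℝ) (hinj : Function.Injective Φ)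
    {ℓ : τ → MvPolynomial σ ℝ} (hΦ : ∀ i, Φ (X i) = ℓ i) (hℓ : ∀ i, (ℓ i).constantCoeff = 0)
    {s : MvPowerSeries τ ℝ} (hs : s ∈ nashSeries τ) : Φ s ∈ nashSeries σ := by
  obtain ⟨⟨f, hf⟩, halg⟩ := hs
  have hcoe := algHom_coe_eq_coe_aeval Φ hΦ
  refine ⟨⟨_, hf.comp_algHom Φ hΦ hℓ⟩,
    halg.ringHom_of_comp_eq (MvPolynomial.aeval ℓ) Φ (fun p q hpq => ?_) ?_⟩
  · exact MvPolynomial.coe_injective _ _ (hinj (by rw [hcoe, hcoe]; exact congrArg _ hpq))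
  · exact RingHom.ext fun p => by simpa [algebraMap_apply'] using (hcoe p).symm

instance : IsLocalHom (algebraMap (nashSeries σ) (MvPowerSeries σ ℝ)) where
  map_nonunit s hs := by
    obtain ⟨⟨f, hf⟩, halg⟩ := s.2
    have hf0 : f 0 ≠ 0 := by
      rw [← hf.constantCoeff_eq]
      exact (isUnit_iff_constantCoeff.mp hs).ne_zero
    obtain ⟨t, ht⟩ := exists_hasTaylorSeries (hf.1.inv hf0)
    have hst : (s : MvPowerSeries σ ℝ) * t = 1 := by
      refine ((hf.mul ht).eq_iff (hasTaylorSeries_eval 1)).mpr ?_ |>.trans MvPolynomial.coe_one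
      filter_upwards [hf.1.continuousAt.eventually_ne hf0] with x hx
      simp [hx]
    have hs0 : (s : MvPowerSeries σ ℝ) ≠ 0 := left_ne_zero_of_mul_eq_one hst
    have htalg : IsAlgebraic (MvPolynomial σ ℝ) t :=
      .of_mul (mem_nonZeroDivisors_of_ne_zero hs0) halg
        (by rw [hst]; exact isAlgebraic_one)
    exact .of_mul_eq_one ⟨t, ⟨_, ht⟩, htalg⟩ (Subtype.ext hst)

instance : IsLocalRing (nashSeries σ) :=
  RingHom.domain_isLocalRing (algebraMap (nashSeries σ) (MvPowerSeries σ ℝ))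

theorem mem_maximalIdeal_nashSeries_iff {s : nashSeries σ} :
    s ∈ maximalIdeal (nashSeries σ) ↔ (s : MvPowerSeries σ ℝ) ∈ maximalIdeal (MvPowerSeries σ ℝ) :=
  not_congr (isUnit_map_iff (algebraMap (nashSeries σ) (MvPowerSeries σ ℝ)) s).symm

theorem exists_analyticAt_implicit {E : Type*} [NormedAddCommGroup E] [NormedSpace ℝ E]
    [CompleteSpace E] {F : E × ℝ → ℝ} {a : E} {t t' : ℝ} (hF : AnalyticAt ℝ F (a, t))
    (h0 : F (a, t) = 0) (ht : HasDerivAt (fun r => F (a, r)) t' t) (ht' : t' ≠ 0) :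
    ∃ z : E → ℝ, AnalyticAt ℝ z a ∧ z a = t ∧ ∀ᶠ x in 𝓝 a, F (x, z x) = 0 := by
  have hcont : ContDiffAt ℝ ⊤ F (a, t) := hF.contDiffAt
  have hpartial : fderiv ℝ F (a, t) ∘L .inr ℝ E ℝ = ContinuousLinearMap.toSpanSingleton ℝ t' :=
    (hF.differentiableAt.hasFDerivAt.comp t (hasFDerivAt_prodMk_right a t)).unique ht.hasFDerivAt
  have hinv : (fderiv ℝ F (a, t) ∘L .inr ℝ E ℝ).IsInvertible :=
    ⟨ContinuousLinearEquiv.unitsEquivAut ℝ (Units.mk0 t' ht'), by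
      rw [hpartial]; ext; simp⟩
  refine ⟨hcont.implicitFunction (by simp) hinv, ?_, hcont.implicitFunction_apply_self _ _, ?_⟩
  · exact (hcont.contDiffAt_implicitFunction (by simp) hinv).analyticAt
  · filter_upwards [hcont.eventually_apply_implicitFunction (by simp) hinv] with x hx
    exact hx.trans h0

theorem exists_hasTaylorSeries_root {F : Polynomial (MvPowerSeries σ ℝ)}
    (hF : ∀ i, ∃ f, HasTaylorSeries f (F.coeff i)) {r : ℝ}
    (hr : (F.map constantCoeff).eval r = 0) (hr' : (F.map constantCoeff).derivative.eval r ≠ 0) :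
    ∃ f s, HasTaylorSeries f s ∧ constantCoeff s = r ∧ F.eval s = 0 := by
  choose g hg using hF
  let G (u : (σ → ℝ) × ℝ) : ℝ := ∑ i ∈ Finset.range (F.natDegree + 1), g i u.1 * u.2 ^ i
  have hG : AnalyticAt ℝ G (0, r) := Finset.analyticAt_fun_sum _ fun i _ =>
    ((hg i).1.comp_of_eq analyticAt_fst rfl).mul (analyticAt_snd.pow i)
  have hG0 (t : ℝ) : G (0, t) = (F.map constantCoeff).eval t := by
    simp [G, ← (hg _).constantCoeff_eq, Polynomial.eval_map, Polynomial.eval₂_eq_sum_range]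
  obtain ⟨z, hz, hz0, hroot⟩ := exists_analyticAt_implicit hG ((hG0 r).trans hr)
    (by simpa only [hG0] using (F.map constantCoeff).hasDerivAt r) hr'
  obtain ⟨s, hs⟩ := exists_hasTaylorSeries hz
  exact ⟨z, s, hs, hs.constantCoeff_eq.trans hz0, (hs.sum_mul_pow hg).eq_zero_iff.mpr hroot⟩

instance : HenselianLocalRing (nashSeries σ) where
  is_henselian F hF a ha ha' := by
    let φ := algebraMap (nashSeries σ) (MvPowerSeries σ ℝ)
    have hconst (G : Polynomial (nashSeries σ)) :
        ((G.map φ).map constantCoeff).eval (constantCoeff (φ a)) =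
          constantCoeff (φ (G.eval a)) := by
      rw [Polynomial.eval_map_apply, Polynomial.eval_map_apply]
    obtain ⟨f, s, hs, hsa, hroot⟩ := exists_hasTaylorSeries_root (F := F.map φ)
      (r := constantCoeff (φ a)) (fun i => by rw [Polynomial.coeff_map]; exact (F.coeff i).2.1)
      (by
        rw [hconst]
        exact mem_maximalIdeal_iff_constantCoeff_eq_zero.mp
          (mem_maximalIdeal_nashSeries_iff.mp ha))
      (by
        rw [Polynomial.derivative_map, Polynomial.derivative_map, hconst]
        exact (isUnit_iff_constantCoeff.mp (ha'.map φ)).ne_zero)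
    have hmem : s ∈ nashSeries σ := mem_nashSeries_of_isAlgebraic hs
      ⟨F, hF.ne_zero, by rwa [Polynomial.aeval_def, Polynomial.eval₂_eq_eval_map]⟩
    refine ⟨⟨s, hmem⟩, Subtype.ext ?_, mem_maximalIdeal_nashSeries_iff.mpr ?_⟩
    · exact (Polynomial.eval_map_apply φ (⟨s, hmem⟩ : nashSeries σ)).symm.trans hroot
    · refine mem_maximalIdeal_iff_constantCoeff_eq_zero.mpr ?_
      exact (map_sub _ _ _).trans (sub_eq_zero.mpr hsa)

end NashSeries

section Shear

open IsLocalRing MvPowerSeries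
open scoped PowerSeries

variable {n : ℕ} {k : Type*} [Field k]

/-- The images of the variables under the linear change of coordinates
`X₀ ↦ X₀`, `X_{j+1} ↦ X_{j+1} + c_j X₀`. -/
noncomputable def shearVars (c : Fin n → k) : Fin (n + 1) → MvPowerSeries (Fin (n + 1)) k :=
  Fin.cons (X 0) fun j => X j.succ + c j • X 0

theorem hasSubst_shearVars (c : Fin n → k) : HasSubst (shearVars c) :=
  hasSubst_of_constantCoeff_zero (Fin.cases (by simp [shearVars]) fun j => by
    simp [shearVars])

theorem substAlgHom_shearVars_neg (c : Fin n → k) :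
    (substAlgHom (R := k) (hasSubst_shearVars (-c))).comp (substAlgHom (hasSubst_shearVars c)) =
      .id k _ := by
  have hX : (fun i => substAlgHom (R := k) (hasSubst_shearVars (-c)) (shearVars c i)) = X := by
    funext i
    cases i using Fin.cases with
    | zero => exact substAlgHom_X _ 0
    | succ j =>
      have hsucc : shearVars c j.succ = X j.succ + c j • X 0 := rfl
      rw [hsucc, map_add, map_smul, substAlgHom_X, substAlgHom_X]
      simp [shearVars]
  ext1 s
  rw [AlgHom.comp_apply, substAlgHom_comp_substAlgHom_apply, coe_substAlgHom, hX, subst_self]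
  rfl

/-- The isomorphism `k⟦X₀, …, Xₙ⟧ ≃ k⟦X₁, …, Xₙ⟧⟦X₀⟧` precomposed with the linear change of
coordinates `shearVars c`, which for generic `c` makes a given series regular in `X₀`. -/
noncomputable def shearEquiv (c : Fin n → k) :
    MvPowerSeries (Fin (n + 1)) k ≃ₐ[k] (MvPowerSeries (Fin n) k)⟦X⟧ :=
  (AlgEquiv.ofAlgHom (substAlgHom (hasSubst_shearVars c)) (substAlgHom (hasSubst_shearVars (-c)))
    (by simpa using substAlgHom_shearVars_neg (-c)) (substAlgHom_shearVars_neg c)).trans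
    (finSuccEquiv k n)

theorem shearEquiv_C (c : Fin n → k) (r : k) :
    shearEquiv c (C r) = PowerSeries.C (C r) :=
  ((shearEquiv c).commutes r).trans PowerSeries.algebraMap_apply

theorem shearEquiv_X_zero (c : Fin n → k) : shearEquiv c (X 0) = PowerSeries.X := by
  have hsubst : substAlgHom (R := k) (hasSubst_shearVars c) (X 0) = X 0 := substAlgHom_X _ 0
  simp [shearEquiv, hsubst, -coe_substAlgHom]

theorem shearEquiv_X_succ (c : Fin n → k) (j : Fin n) :
    shearEquiv c (X j.succ) =
      PowerSeries.C (X j) + PowerSeries.C (C (c j)) * PowerSeries.X := by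
  have hsubst : substAlgHom (R := k) (hasSubst_shearVars c) (X j.succ) = X j.succ + c j • X 0 :=
    substAlgHom_X _ j.succ
  simp [shearEquiv, hsubst, smul_eq_C_mul, -coe_substAlgHom]

theorem shearEquiv_symm_X (c : Fin n → k) : (shearEquiv c).symm PowerSeries.X = X 0 := by
  rw [AlgEquiv.symm_apply_eq, shearEquiv_X_zero]

theorem shearEquiv_symm_C_X (c : Fin n → k) (j : Fin n) :
    (shearEquiv c).symm (PowerSeries.C (X j)) = X j.succ - C (c j) * X 0 := by
  rw [AlgEquiv.symm_apply_eq, map_sub, map_mul, shearEquiv_C, shearEquiv_X_zero,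
    shearEquiv_X_succ, add_sub_cancel_right]

/-- The restriction of `shearEquiv c` to polynomials. -/
noncomputable def polyShear (c : Fin n → k) :
    MvPolynomial (Fin (n + 1)) k →ₐ[k] Polynomial (MvPolynomial (Fin n) k) :=
  MvPolynomial.aeval (Fin.cons Polynomial.X fun j =>
    Polynomial.C (MvPolynomial.X j) +
    Polynomial.C (MvPolynomial.C (c j)) * Polynomial.X)

theorem shearEquiv_coe (c : Fin n → k) (p : MvPolynomial (Fin (n + 1)) k) :
    shearEquiv c p = algebraMap (Polynomial (MvPolynomial (Fin n) k))
      (MvPowerSeries (Fin n) k)⟦X⟧ (polyShear c p) := by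
  suffices hext : (shearEquiv c : _ →+* (MvPowerSeries (Fin n) k)⟦X⟧).comp
      MvPolynomial.coeToMvPowerSeries.ringHom = (algebraMap _ _).comp (polyShear c).toRingHom from
    DFunLike.congr_fun hext p
  refine MvPolynomial.ringHom_ext (fun r => ?_) (Fin.cases ?_ fun j => ?_)
  · simpa [polyShear, PowerSeries.algebraMap_apply', algebraMap_apply'] using shearEquiv_C c r
  · simpa [polyShear, PowerSeries.algebraMap_apply'] using shearEquiv_X_zero c
  · simpa [polyShear, PowerSeries.algebraMap_apply', algebraMap_apply']
      using shearEquiv_X_succ c j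

theorem shearEquiv_aeval (c : Fin n → k) {ι : Type*} (w : ι → MvPowerSeries (Fin (n + 1)) k)
    (F : MvPolynomial ι (MvPolynomial (Fin (n + 1)) k)) :
    shearEquiv c (MvPolynomial.aeval w F) =
      MvPolynomial.aeval (fun i => shearEquiv c (w i)) (F.map (polyShear c).toRingHom) := by
  rw [MvPolynomial.aeval_def, MvPolynomial.aeval_def, MvPolynomial.eval₂_map]
  refine (MvPolynomial.eval₂_comp_left (shearEquiv c).toRingEquiv.toRingHom _ _ _).trans ?_
  congr 1
  exact RingHom.ext fun p => by simpa [algebraMap_apply'] using shearEquiv_coe c p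

theorem shearEquiv_mem_maximalIdeal_pow_iff (c : Fin n → k) {d : ℕ}
    {s : MvPowerSeries (Fin (n + 1)) k} :
    shearEquiv c s ∈ maximalIdeal (MvPowerSeries (Fin n) k)⟦X⟧ ^ d ↔
      s ∈ maximalIdeal (MvPowerSeries (Fin (n + 1)) k) ^ d := by
  rw [← map_ringEquiv_maximalIdeal (shearEquiv c).toRingEquiv, ← Ideal.map_pow]
  exact Ideal.apply_mem_of_equiv_iff (f := (shearEquiv c).toRingEquiv)

theorem isHomogeneous_truncTotal_of_order_eq {σ : Type*} [Finite σ] {g : MvPowerSeries σ k} {d : ℕ}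
    (hg : g.order = d) : (truncTotal (d + 1) g).IsHomogeneous d := by
  intro e he
  rw [show Finsupp.weight 1 e = e.degree from
    (DFunLike.congr_fun Finsupp.degree_eq_weight_one e).symm]
  by_contra hne
  rcases lt_or_gt_of_ne hne with hlt | hgt
  · rw [coeff_truncTotal _ (hlt.trans d.lt_succ_self),
      coeff_of_lt_order (hg ▸ Nat.cast_lt.mpr hlt)] at he
    exact he rfl
  · exact he (coeff_truncTotal_eq_zero _ hgt)

theorem exists_eval_cons_one_ne_zero [Infinite k] {q : MvPolynomial (Fin (n + 1)) k} {d : ℕ}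
    (hq : q.IsHomogeneous d) (hq0 : q ≠ 0) :
    ∃ c : Fin n → k, MvPolynomial.eval (Fin.cons 1 c) q ≠ 0 := by
  obtain ⟨p, hp⟩ : ∃ p, MvPolynomial.eval p (MvPolynomial.X 0 * q) ≠ 0 := by
    by_contra! hall
    exact mul_ne_zero (MvPolynomial.X_ne_zero 0) hq0
      (MvPolynomial.funext fun x => by rw [hall x, map_zero])
  rw [map_mul, MvPolynomial.eval_X] at hp
  have hp0 : p 0 ≠ 0 := left_ne_zero_of_mul hp
  have hcons : p = fun i => p 0 * (Fin.cons 1 fun j => (p 0)⁻¹ * p (Fin.succ j) : _ → k) i :=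
    funext (Fin.cases (by simp) fun j => by simp [hp0])
  refine ⟨fun j => (p 0)⁻¹ * p j.succ, fun h0 => right_ne_zero_of_mul hp ?_⟩
  rw [hcons, ← MvPolynomial.aeval_eq_eval, aeval_mul_eq_of_isHomogeneous hq,
    MvPolynomial.aeval_eq_eval, h0, mul_zero]

theorem truncTotal_ne_zero_of_order_eq {σ : Type*} [Finite σ] {g : MvPowerSeries σ k} {d : ℕ}
    (hg : g.order = d) : truncTotal (d + 1) g ≠ 0 := by
  obtain ⟨e, he, hed⟩ := exists_coeff_ne_zero_and_order (f := g) (by simp [hg])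
  rw [hg, Nat.cast_inj] at hed
  intro h0
  rw [← coeff_truncTotal g (hed.trans_lt d.lt_succ_self), h0] at he
  exact he rfl

theorem coeff_algHom_of_order_eq {σ K : Type*} [Finite σ] [CommRing K] [Algebra k K]
    (χ : MvPowerSeries σ k →ₐ[k] K⟦X⟧) {p : σ → k}
    (hχ : ∀ i, χ (X i) = PowerSeries.X * algebraMap k K⟦X⟧ (p i)) {g : MvPowerSeries σ k} {d : ℕ}
    (hg : g.order = d) :
    (χ g).coeff d = algebraMap k K (MvPolynomial.eval p (truncTotal (d + 1) g)) := by
  have hsub := sub_truncTotal_mem_span_range_X_pow g (d + 1)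
  rw [← maximalIdeal_eq_span_range_X] at hsub
  have hdvd := algHom_mem_pow_of_mem_maximalIdeal_pow χ (I := Ideal.span {PowerSeries.X})
    (fun i => by rw [hχ]; exact Ideal.mul_mem_right _ _ (Ideal.mem_span_singleton_self _)) hsub
  rw [map_sub, algHom_coe_eq_aeval, funext hχ,
    aeval_mul_eq_of_isHomogeneous (isHomogeneous_truncTotal_of_order_eq hg),
    Ideal.span_singleton_pow, Ideal.mem_span_singleton, PowerSeries.X_pow_dvd_iff] at hdvd
  have haeval (q : MvPolynomial σ k) : MvPolynomial.aeval (fun i => algebraMap k K⟦X⟧ (p i)) q =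
      PowerSeries.C (algebraMap k K (MvPolynomial.eval p q)) :=
    (MvPolynomial.aeval_algebraMap_apply _ p q).trans PowerSeries.algebraMap_apply
  have hd := hdvd d d.lt_succ_self
  rwa [map_sub, sub_eq_zero, haeval, PowerSeries.coeff_X_pow_mul', if_pos le_rfl, Nat.sub_self,
    PowerSeries.coeff_zero_C] at hd

theorem exists_map_residue_shearEquiv_ne_zero [Infinite k] {g : MvPowerSeries (Fin (n + 1)) k}
    (hg : g ≠ 0) :
    ∃ c : Fin n → k, (shearEquiv c g).map (residue (MvPowerSeries (Fin n) k)) ≠ 0 := by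
  obtain ⟨d, hd⟩ := ENat.ne_top_iff_exists.mp (order_eq_top_iff.not.mpr hg)
  obtain ⟨c, hc⟩ := exists_eval_cons_one_ne_zero (isHomogeneous_truncTotal_of_order_eq hd.symm)
    (truncTotal_ne_zero_of_order_eq hd.symm)
  let ρ : MvPowerSeries (Fin n) k →ₐ[k] ResidueField (MvPowerSeries (Fin n) k) :=
    IsScalarTower.toAlgHom k _ _
  have hρX (j : Fin n) : ρ (X j) = 0 :=
    (residue_eq_zero_iff _).mpr (mem_maximalIdeal_iff_constantCoeff_eq_zero.mpr (constantCoeff_X j))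
  have hρC (r : k) : ρ (C r) = algebraMap k _ r := ρ.commutes r
  let χ := (PowerSeries.mapAlgHom ρ).comp (shearEquiv c).toAlgHom
  have hχ (s) : χ s = (shearEquiv c s).map ρ.toRingHom := PowerSeries.mapAlgHom_apply ρ _
  have hcoeff := coeff_algHom_of_order_eq χ (p := Fin.cons 1 c) (Fin.cases
    (by simp [hχ, shearEquiv_X_zero])
    (fun j => by simp [hχ, shearEquiv_X_succ, PowerSeries.algebraMap_apply, mul_comm, hρX, hρC]))
    hd.symm
  refine ⟨c, fun h0 => hc ?_⟩
  rw [show χ g = 0 from (hχ g).trans h0, map_zero] at hcoeff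
  exact (_root_.map_eq_zero _).mp hcoeff.symm

end Shear

section NashApproximation

open IsLocalRing MvPowerSeries
open scoped PowerSeries

variable {n : ℕ}

theorem shearEquiv_symm_algebraMap_mem_nashSeries (c : Fin n → ℝ)
    (p : Polynomial (nashSeries (Fin n))) :
    (shearEquiv c).symm (algebraMap _ (MvPowerSeries (Fin n) ℝ)⟦X⟧ p) ∈
      nashSeries (Fin (n + 1)) := by
  have hC (s : nashSeries (Fin n)) :
      (shearEquiv c).symm (PowerSeries.C (s : MvPowerSeries (Fin n) ℝ)) ∈ nashSeries _ := by
    refine mem_nashSeries_of_algHom ((shearEquiv c).symm.toAlgHom.comp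
      (IsScalarTower.toAlgHom ℝ (MvPowerSeries (Fin n) ℝ) (MvPowerSeries (Fin n) ℝ)⟦X⟧))
      ((shearEquiv c).symm.injective.comp PowerSeries.C_injective)
      (ℓ := fun j => MvPolynomial.X j.succ - MvPolynomial.C (c j) * MvPolynomial.X 0)
      (fun j => ?_) (fun j => ?_) s.2
    · refine (shearEquiv_symm_C_X c j).trans ?_
      rw [mvPolynomial_coe_sub]
      simp
    · simp
  have hX : (shearEquiv c).symm PowerSeries.X ∈ nashSeries (Fin (n + 1)) := by
    simpa [shearEquiv_symm_X] using coe_mem_nashSeries (MvPolynomial.X 0)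
  induction p using Polynomial.induction_on' with
  | add p q hp hq => simpa only [map_add] using add_mem hp hq
  | monomial d s =>
    simpa [PowerSeries.algebraMap_apply', ← Polynomial.C_mul_X_pow_eq_monomial] using
      mul_mem (hC s) (pow_mem hX d)

theorem approximationProperty_nashSeries_zero : ApproximationProperty (nashSeries (Fin 0)) := by
  intro ι _ a c
  have ha (i : ι) : a i = (MvPolynomial.C (constantCoeff (a i)) : MvPolynomial (Fin 0) ℝ) :=
    (isEmptyEquiv (σ := Fin 0) (R := ℝ)).injective (by simp [isEmptyEquiv])
  exact ⟨fun i => ⟨a i, ha i ▸ coe_mem_nashSeries _⟩, by simp, fun F hF =>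
    Subtype.ext ((MvPolynomial.comp_aeval_apply _ (nashSeries (Fin 0)).val F).trans hF)⟩

/-- The embedding of polynomials in `X₀` with Nash coefficients into the Nash series, given by the
inverse of `shearEquiv c`. -/
noncomputable def nashUnshear (c : Fin n → ℝ) :
    Polynomial (nashSeries (Fin n)) →+* nashSeries (Fin (n + 1)) :=
  ((shearEquiv c).symm.toRingEquiv.toRingHom.comp (algebraMap _ _)).codRestrict _
    (shearEquiv_symm_algebraMap_mem_nashSeries c)

theorem shearEquiv_nashUnshear (c : Fin n → ℝ) (p : Polynomial (nashSeries (Fin n))) :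
    shearEquiv c (nashUnshear c p) = algebraMap _ (MvPowerSeries (Fin n) ℝ)⟦X⟧ p :=
  (shearEquiv c).apply_symm_apply _

theorem nashUnshear_injective (c : Fin n → ℝ) : Function.Injective (nashUnshear c) := by
  intro p q hpq
  have h := congrArg (fun s : nashSeries (Fin (n + 1)) => shearEquiv c s) hpq
  simp only [shearEquiv_nashUnshear, PowerSeries.algebraMap_apply'] at h
  exact Polynomial.coe_injective _ (PowerSeries.map_injective _ Subtype.val_injective h)

theorem aeval_nashUnshear_eq (c : Fin n → ℝ) {ι : Type*}
    {w : ι → Polynomial (nashSeries (Fin n))} {p : Polynomial (nashSeries (Fin n))}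
    {F : MvPolynomial ι (MvPolynomial (Fin (n + 1)) ℝ)}
    (hF : MvPolynomial.aeval (fun i => algebraMap _ (MvPowerSeries (Fin n) ℝ)⟦X⟧ (w i))
      (F.map (polyShear c).toRingHom) = algebraMap _ _ p) :
    MvPolynomial.aeval (fun i => nashUnshear c (w i)) F = nashUnshear c p := by
  refine Subtype.ext ((shearEquiv c).injective ?_)
  rw [shearEquiv_nashUnshear, ← hF]
  rw [← funext fun i => shearEquiv_nashUnshear c (w i), ← shearEquiv_aeval]
  exact congrArg _ (MvPolynomial.comp_aeval_apply _ (nashSeries (Fin (n + 1))).val F)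

theorem ApproximationProperty.exists_nashSeries_dvd_aeval
    (hn : ApproximationProperty (nashSeries (Fin n))) {ι : Type*} [Finite ι]
    (y : ι → MvPowerSeries (Fin (n + 1)) ℝ) {δ : MvPolynomial ι (MvPolynomial (Fin (n + 1)) ℝ)}
    (hδ : MvPolynomial.aeval y δ ≠ 0) {d : ℕ} (hd : d ≠ 0) :
    ∃ w : ι → nashSeries (Fin (n + 1)), MvPolynomial.aeval w δ ≠ 0 ∧
      (∀ i, (w i : MvPowerSeries (Fin (n + 1)) ℝ) - y i ∈ maximalIdeal _ ^ d) ∧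
      ∀ F : MvPolynomial ι (MvPolynomial (Fin (n + 1)) ℝ), MvPolynomial.aeval y F = 0 →
        MvPolynomial.aeval w F ∈ Ideal.span {MvPolynomial.aeval w δ} *
          (maximalIdeal (MvPowerSeries (Fin (n + 1)) ℝ) ^ d).comap (algebraMap _ _) := by
  obtain ⟨c, hc⟩ := exists_map_residue_shearEquiv_ne_zero hδ
  rw [shearEquiv_aeval] at hc
  obtain ⟨w, α, v, hα, hv, hw, hwδ, hwF⟩ := hn.exists_weierstrass_specialization _ hc hd
  have hmem {s : MvPowerSeries (Fin (n + 1)) ℝ} :=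
    shearEquiv_mem_maximalIdeal_pow_iff c (d := d) (s := s)
  have hδ' := aeval_nashUnshear_eq c hwδ
  obtain ⟨u, hu⟩ : IsUnit (nashUnshear c v) := by
    refine (isUnit_map_iff (algebraMap _ (MvPowerSeries (Fin (n + 1)) ℝ)) _).mp ?_
    exact (isUnit_map_iff (shearEquiv c) _).mp ((shearEquiv_nashUnshear c v).symm ▸ hv)
  refine ⟨fun i => nashUnshear c (w i), ?_, fun i => hmem.mp ?_, fun F hF => ?_⟩
  · rw [hδ', map_mul, ← hu]
    exact mul_ne_zero (map_ne_zero_iff _ (nashUnshear_injective c) |>.mpr hα.ne_zero) u.ne_zero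
  · rw [map_sub, shearEquiv_nashUnshear]
    exact hw i
  · obtain ⟨h, hh, hFh⟩ := hwF (F.map (polyShear c).toRingHom)
      (by rw [← shearEquiv_aeval, hF, map_zero])
    rw [aeval_nashUnshear_eq c hFh, hδ', Ideal.mem_span_singleton_mul]
    refine ⟨↑u⁻¹ * nashUnshear c h, Ideal.mul_mem_left _ _ (hmem.mp ?_), ?_⟩
    · exact (shearEquiv_nashUnshear c h).symm ▸ hh
    · rw [map_mul, map_mul, ← hu, mul_assoc, Units.mul_inv_cancel_left]

theorem approximationProperty_nashSeries (n : ℕ) : ApproximationProperty (nashSeries (Fin n)) := by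
  induction n with
  | zero => exact approximationProperty_nashSeries_zero
  | succ n ih =>
    intro ι _ y d
    have hker : RingHom.ker (algebraMap (MvPolynomial (Fin (n + 1)) ℝ) (MvPowerSeries _ ℝ)) ≤
        RingHom.ker (algebraMap _ (nashSeries (Fin (n + 1)))) := fun p hp => Subtype.ext hp
    obtain ⟨δ, hδ⟩ := exists_isTougeronDenominator (maximalIdeal _) hker y
    obtain ⟨w, hwδ, hwy, hwF⟩ := ih.exists_nashSeries_dvd_aeval y hδ.aeval_ne_zero d.succ_ne_zero
    obtain ⟨b, hbw, hb⟩ := hδ.exists_isSpecialization _ (fun s hs =>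
      mem_maximalIdeal_nashSeries_iff.mpr (Ideal.pow_le_self d.succ_ne_zero hs)) w hwδ hwF
    refine ⟨b, fun i => ?_, hb⟩
    have := add_mem (Ideal.mem_comap.mp (hbw i)) (hwy i)
    refine Ideal.pow_le_pow_right d.le_succ ?_
    simpa using this

end NashApproximation

section SimpleRoots

universe u

open IsLocalRing Polynomial

theorem exists_aeval_eq_zero_and_aeval_derivative_ne_zero {R S : Type*} [CommRing R] [CommRing S]
    [Algebra R S] [FaithfulSMul R S] [IsDomain S] [CharZero S] {u : S} (hu : IsAlgebraic R u) :
    ∃ p : R[X], aeval u p = 0 ∧ aeval u (derivative p) ≠ 0 := by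
  obtain ⟨F, hF0, hF⟩ := hu
  obtain ⟨p, hp⟩ := exists_isMinimalRelation (β := algebraMap R S) hF
    ((Polynomial.map_ne_zero_iff (FaithfulSMul.algebraMap_injective R S)).mpr hF0)
  exact ⟨p, hp.eval₂_eq_zero, hp.eval₂_derivative_ne_zero⟩

theorem eq_of_eval₂_eq_zero_of_sub_mem {S : Type*} [CommRing S] [IsDomain S] {I : Ideal S}
    {R : Type*} [CommRing R] {θ : R →+* S} {p : R[X]} {u v : S} (hu : p.eval₂ θ u = 0)
    (hv : p.eval₂ θ v = 0) (hd : (derivative p).eval₂ θ u ∉ I) (h : v - u ∈ I) : v = u := by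
  obtain ⟨k, hk⟩ := binomExpansion (p.map θ) u (v - u)
  rw [add_sub_cancel, derivative_map, eval_map, eval_map, eval_map, hu, hv] at hk
  have hz : (v - u) * ((derivative p).eval₂ θ u + k * (v - u)) = 0 := by linear_combination -hk
  refine sub_eq_zero.mp ((mul_eq_zero.mp hz).resolve_right fun h0 => hd ?_)
  rw [eq_neg_of_add_eq_zero_left h0]
  exact neg_mem (I.mul_mem_left _ h)

theorem exists_forall_notMem_pow {S : Type*} [CommRing S] (I : Ideal S) [IsHausdorff I S] {d : S}
    (hd : d ≠ 0) : ∃ k, ∀ l ≥ k, d ∉ I ^ l := by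
  by_contra! h
  refine hd (IsHausdorff.haus ‹_› d fun k => ?_)
  obtain ⟨l, hl, hdl⟩ := h k
  simpa [SModEq.zero] using Ideal.pow_le_pow_right hl hdl

theorem ApproximationProperty.exists_isSpecialization_sumElim {P : Type*} {A : Type u} [CommRing P]
    [CommRing A] [IsLocalRing A] [IsDomain A] [CharZero A] [IsHausdorff (maximalIdeal A) A]
    [Algebra P A] [FaithfulSMul P A] {S : Subalgebra P A} (hS : ApproximationProperty S)
    {ι κ : Type u} [Finite ι] [Finite κ] (t : ι → A) {s : κ → S}
    (hs : ∀ j, IsAlgebraic P (s j : A)) (c : ℕ) :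
    ∃ b : ι → S, (∀ i, (b i : A) - t i ∈ maximalIdeal A ^ c) ∧
      IsSpecialization P (Sum.elim t fun j => (s j : A)) (Sum.elim b s) := by
  cases nonempty_fintype κ
  choose q hq hq' using fun j => exists_aeval_eq_zero_and_aeval_derivative_ne_zero (hs j)
  choose e he using fun j => exists_forall_notMem_pow (maximalIdeal A) (hq' j)
  let d := c + Finset.univ.sup e
  obtain ⟨b, hbm, hb⟩ := hS (ι ⊕ κ) (Sum.elim t fun j => (s j : A)) d
  have hbs (j : κ) : b (Sum.inr j) = s j := by
    have hroot := hb (aeval (MvPolynomial.X (Sum.inr j)) (q j)) (by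
      rw [← aeval_algHom_apply, MvPolynomial.aeval_X]; exact hq j)
    rw [← aeval_algHom_apply, MvPolynomial.aeval_X] at hroot
    have hroot' : aeval (b (Sum.inr j) : A) (q j) = 0 := by
      rw [← Subalgebra.coe_val, aeval_algHom_apply, hroot, map_zero]
    exact Subtype.ext (eq_of_eval₂_eq_zero_of_sub_mem (hq j) hroot'
      (he j d ((Finset.le_sup (Finset.mem_univ j)).trans (Nat.le_add_left _ _)))
      (hbm (Sum.inr j)))
  refine ⟨b ∘ Sum.inl, fun i => ?_, ?_⟩
  · exact Ideal.pow_le_pow_right (Nat.le_add_right _ _) (hbm (Sum.inl i))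
  · rwa [show s = b ∘ Sum.inr from (funext hbs).symm, Sum.elim_comp_inl_inr,
      show b ∘ Sum.inr = s from funext hbs]

end SimpleRoots

section Germs

open Asymptotics IsLocalRing Polynomial

section Contact

variable {E F : Type*} [NormedAddCommGroup E] [NormedAddCommGroup F] {f g : E → F} {c : ℕ}

theorem apply_zero_eq_of_sub_isBigO (hO : (f - g) =O[𝓝 0] fun x => ‖x‖ ^ c) (hc : c ≠ 0) :
    f 0 = g 0 := by
  refine sub_eq_zero.mp (IsBigO.eq_zero_of_norm_pow (f := f - g) (x₀ := 0) (n := c) ?_ hc)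
  simpa only [sub_zero] using hO

variable [NormedSpace ℝ F]

theorem comp_sub_comp_isBigO {G : Type*} [NormedAddCommGroup G] [NormedSpace ℝ G] {h : F → G}
    (hh : AnalyticAt ℝ h (g 0)) (hf : ContinuousAt f 0) (hg : ContinuousAt g 0) (hfg : f 0 = g 0) :
    (h ∘ f - h ∘ g) =O[𝓝 0] (f - g) := by
  have hfg' : Filter.Tendsto (fun x => (f x, g x)) (𝓝 0) (𝓝 (g 0, g 0)) :=
    Filter.Tendsto.prodMk_nhds (hfg ▸ hf) hg
  exact hh.hasStrictFDerivAt.isBigO_sub.comp_tendsto hfg'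

variable [NormedSpace ℝ E]

theorem iteratedFDeriv_eq_zero_of_isBigO [CompleteSpace F] (hf : AnalyticAt ℝ f 0)
    (hO : f =O[𝓝 0] fun x => ‖x‖ ^ c) {k : ℕ} (hk : k < c) :
    iteratedFDeriv ℝ k f 0 = 0 := by
  obtain ⟨p, r, hp⟩ := hf
  have hdiag {j : ℕ} (hj : j < c) (y : E) : p j (fun _ => y) = 0 :=
    multilinear_apply_diag_eq_zero_of_isBigO ⟨r, hp⟩ hO hj y
  let q : FormalMultilinearSeries ℝ E F := fun j => if j < c then 0 else p j
  have hq : HasFPowerSeriesOnBall f q 0 r := by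
    refine ⟨hp.r_le.trans (FormalMultilinearSeries.radius_le_of_le fun j => ?_), hp.r_pos,
      fun {y} hy => ?_⟩
    · by_cases hj : j < c <;> simp [q, hj]
    · convert hp.hasSum hy using 2 with j
      by_cases hj : j < c <;> simp [q, hj, hdiag]
  ext1 v
  simp [hq.iteratedFDeriv_eq_sum_of_completeSpace, q, hk]

theorem iteratedFDeriv_eq_of_sub_isBigO [CompleteSpace F] (hf : AnalyticAt ℝ f 0)
    (hg : AnalyticAt ℝ g 0) (hO : (f - g) =O[𝓝 0] fun x => ‖x‖ ^ c) {k : ℕ} (hk : k < c) :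
    iteratedFDeriv ℝ k f 0 = iteratedFDeriv ℝ k g 0 := by
  rw [← sub_eq_zero, ← iteratedFDeriv_sub_apply hf.contDiffAt hg.contDiffAt]
  exact iteratedFDeriv_eq_zero_of_isBigO (hf.sub hg) hO hk

theorem hasFDerivAt_of_sub_isBigO (hO : (f - g) =O[𝓝 0] fun x => ‖x‖ ^ c) (hc : 1 < c)
    {D : E →L[ℝ] F} (hg : HasFDerivAt g D 0) : HasFDerivAt f D 0 := by
  have hsub : HasFDerivAt (f - g) (0 : E →L[ℝ] F) 0 :=
    IsBigO.hasFDerivAt (n := c) (by simpa only [sub_zero] using hO) hc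
  simpa using hsub.add hg

end Contact

theorem map_nhds_zero_of_hasFDerivAt_equiv {E : Type*} [NormedAddCommGroup E] [NormedSpace ℝ E]
    [CompleteSpace E] {τ : E → E} (hτ : AnalyticAt ℝ τ 0) (hτ0 : τ 0 = 0) {D : E ≃L[ℝ] E}
    (hD : HasFDerivAt τ (D : E →L[ℝ] E) 0) : Filter.map τ (𝓝 0) = 𝓝 0 := by
  have hstrict := hτ.hasStrictFDerivAt
  rw [hD.fderiv] at hstrict
  simpa only [hτ0] using hstrict.map_nhds_eq_of_equiv

section Substitution

variable {k A B σ : Type*} [CommRing k] [CommRing A] [Algebra k A] [CommRing B] [Algebra k B]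

theorem algHom_aevalTower (Φ : A →ₐ[k] B) (t : σ → A) (s : A) (p : (MvPolynomial σ k)[X]) :
    Φ (aevalTower (MvPolynomial.aeval t) s p) =
      aevalTower (MvPolynomial.aeval (Φ ∘ t)) (Φ s) p := by
  have hext : Φ.comp (aevalTower (MvPolynomial.aeval t) s) =
      aevalTower (MvPolynomial.aeval (Φ ∘ t)) (Φ s) := by ext <;> simp
  exact DFunLike.congr_fun hext p

theorem aevalTower_sub_aevalTower_mem {I : Ideal A} {t t' : σ → A} (h : ∀ i, t' i - t i ∈ I)
    (s : A) (p : (MvPolynomial σ k)[X]) :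
    aevalTower (MvPolynomial.aeval t') s p - aevalTower (MvPolynomial.aeval t) s p ∈ I :=
  eval₂_sub_eval₂_mem (aeval_sub_aeval_mem h) s p

theorem aeval_sumElim_aevalTower_X {P κ : Type*} [CommRing P] [Algebra k P] [Algebra P A]
    [IsScalarTower k P A] (t : σ → A) (s : κ → A) (j : κ) (p : (MvPolynomial σ k)[X]) :
    MvPolynomial.aeval (Sum.elim t s) (aevalTower (MvPolynomial.aeval fun i =>
        (MvPolynomial.X (Sum.inl i) : MvPolynomial (σ ⊕ κ) P)) (MvPolynomial.X (Sum.inr j)) p) =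
      aevalTower (MvPolynomial.aeval t) (s j) p := by
  have := algHom_aevalTower ((MvPolynomial.aeval (R := P) (Sum.elim t s)).restrictScalars k)
    (fun i => MvPolynomial.X (Sum.inl i)) (MvPolynomial.X (Sum.inr j)) p
  simpa [Function.comp_def] using this

theorem IsSpecialization.aevalTower_eq_zero {P κ : Type*} [CommRing P] [Algebra k P] [Algebra P A]
    [Algebra P B] [IsScalarTower k P A] [IsScalarTower k P B] {t : σ → A} {t' : σ → B}
    {s : κ → A} {s' : κ → B} (h : IsSpecialization P (Sum.elim t s) (Sum.elim t' s')) {j : κ}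
    {p : (MvPolynomial σ k)[X]} (hp : aevalTower (MvPolynomial.aeval t) (s j) p = 0) :
    aevalTower (MvPolynomial.aeval t') (s' j) p = 0 := by
  rw [← aeval_sumElim_aevalTower_X (P := P)] at hp ⊢
  exact h _ hp

end Substitution

/-- Polynomials in `n + 1` variables as polynomials in the last variable. -/
noncomputable def lastVariableEquiv (n : ℕ) :
    MvPolynomial (Fin (n + 1)) ℝ ≃ₐ[ℝ] (MvPolynomial (Fin n) ℝ)[X] :=
  (MvPolynomial.renameEquiv ℝ (finRotate (n + 1))).trans (MvPolynomial.finSuccEquiv ℝ n)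

theorem aevalTower_lastVariableEquiv {n : ℕ} (x : Fin n → ℝ) (z : ℝ)
    (P : MvPolynomial (Fin (n + 1)) ℝ) :
    aevalTower (MvPolynomial.aeval x) z (lastVariableEquiv n P) =
      MvPolynomial.eval (Fin.snoc x z) P := by
  have hext : (aevalTower (MvPolynomial.aeval x) z).comp (lastVariableEquiv n).toAlgHom =
      MvPolynomial.aeval (Fin.snoc x z) := by
    refine MvPolynomial.algHom_ext fun i => ?_
    cases i using Fin.lastCases <;>
      simp [lastVariableEquiv, MvPolynomial.finSuccEquiv_X_zero, MvPolynomial.finSuccEquiv_X_succ]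
  exact DFunLike.congr_fun hext P

section TaylorSeries

variable {σ : Type*} [Fintype σ]

theorem HasTaylorSeries.aevalTower {τ : (σ → ℝ) → σ → ℝ} {t : σ → MvPowerSeries σ ℝ}
    (ht : ∀ i, HasTaylorSeries (fun x => τ x i) (t i)) {f : (σ → ℝ) → ℝ} {s : MvPowerSeries σ ℝ}
    (hf : HasTaylorSeries f s) (p : (MvPolynomial σ ℝ)[X]) :
    HasTaylorSeries (fun x => Polynomial.aevalTower (MvPolynomial.aeval (τ x)) (f x) p)
      (Polynomial.aevalTower (MvPolynomial.aeval t) s p) := by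
  let z : taylorPairs σ := Polynomial.aevalTower (MvPolynomial.aeval fun i => ⟨(_, t i), ht i⟩)
    ⟨(f, s), hf⟩ p
  have hfst : z.1.1 = fun x => Polynomial.aevalTower (MvPolynomial.aeval (τ x)) (f x) p :=
    funext fun x => algHom_aevalTower (((Pi.evalAlgHom ℝ (fun _ : σ → ℝ => ℝ) x).comp
      (AlgHom.fst ℝ _ _)).comp (taylorPairs σ).val) _ _ p
  have hsnd : z.1.2 = Polynomial.aevalTower (MvPolynomial.aeval t) s p :=
    algHom_aevalTower ((AlgHom.snd ℝ _ _).comp (taylorPairs σ).val) _ _ p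
  exact hfst ▸ hsnd ▸ z.2

theorem HasTaylorSeries.aeval {f : (σ → ℝ) → ℝ} {s : MvPowerSeries σ ℝ} (hf : HasTaylorSeries f s)
    (p : (MvPolynomial σ ℝ)[X]) :
    HasTaylorSeries (fun x => Polynomial.aevalTower (MvPolynomial.aeval x) (f x) p)
      (Polynomial.aeval s p) := by
  have hX (i : σ) : HasTaylorSeries (fun x => x i) (MvPowerSeries.X i) := by
    simpa using hasTaylorSeries_eval (MvPolynomial.X i : MvPolynomial σ ℝ)
  have hext : Polynomial.aevalTower (MvPolynomial.aeval MvPowerSeries.X) s =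
      (Polynomial.aeval (R := MvPolynomial σ ℝ) s).restrictScalars ℝ := by
    ext <;> simp [MvPowerSeries.algebraMap_apply']
  simpa only [hext, AlgHom.restrictScalars_apply] using HasTaylorSeries.aevalTower hX hf p

theorem HasTaylorSeries.aevalTower_eq_zero_iff_of_comp {τ : (σ → ℝ) → σ → ℝ}
    {t : σ → MvPowerSeries σ ℝ} (ht : ∀ i, HasTaylorSeries (fun x => τ x i) (t i))
    (hτ : Filter.map τ (𝓝 0) = 𝓝 0) {f : (σ → ℝ) → ℝ} {u s : MvPowerSeries σ ℝ}
    (hf : HasTaylorSeries f u) (hfτ : HasTaylorSeries (f ∘ τ) s) {p : (MvPolynomial σ ℝ)[X]} :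
    Polynomial.aevalTower (MvPolynomial.aeval t) s p = 0 ↔ Polynomial.aeval u p = 0 := by
  rw [(HasTaylorSeries.aevalTower ht hfτ p).eq_zero_iff, (hf.aeval p).eq_zero_iff]
  exact ⟨fun h => by rw [← hτ]; exact h, fun h => by rw [← hτ] at h; exact h⟩

theorem sub_isBigO_of_forall_sub_mem {τ τ' : (σ → ℝ) → σ → ℝ} {t t' : σ → MvPowerSeries σ ℝ}
    (ht : ∀ i, HasTaylorSeries (fun x => τ x i) (t i))
    (ht' : ∀ i, HasTaylorSeries (fun x => τ' x i) (t' i)) {e : ℕ}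
    (h : ∀ i, t' i - t i ∈ maximalIdeal (MvPowerSeries σ ℝ) ^ e) :
    (τ' - τ) =O[𝓝 0] fun x => ‖x‖ ^ e :=
  isBigO_pi.mpr fun i => ((ht' i).sub (ht i)).mem_maximalIdeal_pow_iff.mp (h i)

theorem comp_sub_mem_maximalIdeal_pow {f : (σ → ℝ) → ℝ} (hf : AnalyticAt ℝ f 0)
    {τ τ' : (σ → ℝ) → σ → ℝ} (hτ : ContinuousAt τ 0) (hτ' : ContinuousAt τ' 0) (hτ0 : τ 0 = 0)
    (hτ'0 : τ' 0 = 0) {e : ℕ} (hO : (τ' - τ) =O[𝓝 0] fun x => ‖x‖ ^ e)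
    {s s' : MvPowerSeries σ ℝ} (hs : HasTaylorSeries (f ∘ τ) s)
    (hs' : HasTaylorSeries (f ∘ τ') s') : s' - s ∈ maximalIdeal (MvPowerSeries σ ℝ) ^ e :=
  (hs'.sub hs).mem_maximalIdeal_pow_iff.mpr
    ((comp_sub_comp_isBigO (by rwa [hτ0]) hτ' hτ (hτ'0.trans hτ0.symm)).trans hO)

theorem exists_forall_hasTaylorSeries_comp {f : (σ → ℝ) → ℝ} {u s : MvPowerSeries σ ℝ}
    (hu : IsAlgebraic (MvPolynomial σ ℝ) u) (hf : HasTaylorSeries f u) {τ : (σ → ℝ) → σ → ℝ}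
    {t : σ → MvPowerSeries σ ℝ} (ht : ∀ i, HasTaylorSeries (fun x => τ x i) (t i))
    (hτ0 : τ 0 = 0) (hτ : Filter.map τ (𝓝 0) = 𝓝 0) (hs : HasTaylorSeries (f ∘ τ) s) :
    ∃ e₀, ∀ e ≥ e₀, ∀ (τ' : (σ → ℝ) → σ → ℝ) (t' : σ → MvPowerSeries σ ℝ),
      (∀ i, HasTaylorSeries (fun x => τ' x i) (t' i)) → τ' 0 = 0 → Filter.map τ' (𝓝 0) = 𝓝 0 →
      (∀ i, t' i - t i ∈ maximalIdeal (MvPowerSeries σ ℝ) ^ e) →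
      (∀ p : (MvPolynomial σ ℝ)[X], aevalTower (MvPolynomial.aeval t) s p = 0 →
        aevalTower (MvPolynomial.aeval t') s p = 0) → HasTaylorSeries (f ∘ τ') s := by
  obtain ⟨p, hp, hp'⟩ := exists_aeval_eq_zero_and_aeval_derivative_ne_zero hu
  have hpt' := (HasTaylorSeries.aevalTower_eq_zero_iff_of_comp ht hτ hf hs).not.mpr hp'
  obtain ⟨e₀, he₀⟩ := exists_forall_notMem_pow (maximalIdeal (MvPowerSeries σ ℝ)) hpt'
  refine ⟨e₀, fun e he τ' t' ht' hτ'0 hτ' htt' hspec => ?_⟩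
  have hanal {ρ : (σ → ℝ) → σ → ℝ} {r : σ → MvPowerSeries σ ℝ}
      (hr : ∀ i, HasTaylorSeries (fun x => ρ x i) (r i)) : AnalyticAt ℝ ρ 0 :=
    analyticAt_pi_iff.mpr fun i => (hr i).1
  obtain ⟨r, hr⟩ := exists_hasTaylorSeries (f := f ∘ τ')
    (AnalyticAt.comp (by rw [hτ'0]; exact hf.1) (hanal ht'))
  have hrs := comp_sub_mem_maximalIdeal_pow hf.1 (hanal ht).continuousAt (hanal ht').continuousAt
    hτ0 hτ'0 (sub_isBigO_of_forall_sub_mem ht ht' htt') hs hr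
  have hroot_s := hspec p ((HasTaylorSeries.aevalTower_eq_zero_iff_of_comp ht hτ hf hs).mpr hp)
  have hroot_r := (HasTaylorSeries.aevalTower_eq_zero_iff_of_comp ht' hτ' hf hr).mpr hp
  have hderiv : aevalTower (MvPolynomial.aeval t') s (derivative p) ∉ maximalIdeal _ ^ e :=
    fun hmem => he₀ e he ((Submodule.sub_mem_iff_right _ hmem).mp
      (aevalTower_sub_aevalTower_mem htt' s (derivative p)))
  rwa [eq_of_eval₂_eq_zero_of_sub_mem hroot_s hroot_r hderiv hrs] at hr

end TaylorSeries

theorem HasTaylorSeries.isAlgebraic_iff {n : ℕ} {f : (Fin n → ℝ) → ℝ}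
    {s : MvPowerSeries (Fin n) ℝ} (hf : HasTaylorSeries f s) :
    IsAlgebraic (MvPolynomial (Fin n) ℝ) s ↔ ∃ P : MvPolynomial (Fin (n + 1)) ℝ, P ≠ 0 ∧
      ∀ᶠ x : Fin n → ℝ in 𝓝 0, MvPolynomial.eval (Fin.snoc x (f x)) P = 0 := by
  rw [IsAlgebraic, (lastVariableEquiv n).surjective.exists]
  refine exists_congr fun P => and_congr ?_ ?_
  · rw [map_ne_zero_iff _ (lastVariableEquiv n).injective]
  · rw [(hf.aeval _).eq_zero_iff]
    simp only [← aevalTower_lastVariableEquiv]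
    rfl

theorem nashGerm_iff {n m : ℕ} {f : (Fin n → ℝ) → Fin m → ℝ} :
    NashGerm f ↔
      f 0 = 0 ∧ ∀ j, ∃ s ∈ nashSeries (Fin n), HasTaylorSeries (fun x => f x j) s := by
  rw [NashGerm, analyticAt_pi_iff, and_left_comm, ← forall_and]
  refine and_congr_right fun _ => forall_congr' fun j => ⟨fun ⟨hf, hP⟩ => ?_, ?_⟩
  · obtain ⟨s, hs⟩ := exists_hasTaylorSeries hf
    exact ⟨s, ⟨⟨_, hs⟩, hs.isAlgebraic_iff.mpr hP⟩, hs⟩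
  · rintro ⟨s, hs, hf⟩
    exact ⟨hf.1, hf.isAlgebraic_iff.mp hs.2⟩

theorem exists_hasTaylorSeries_nash_specialization {n m : ℕ} (t : Fin n → MvPowerSeries (Fin n) ℝ)
    {s : Fin m → MvPowerSeries (Fin n) ℝ} (hs : ∀ j, s j ∈ nashSeries (Fin n)) (c : ℕ) :
    ∃ (τ' : (Fin n → ℝ) → Fin n → ℝ) (t' : Fin n → MvPowerSeries (Fin n) ℝ),
      (∀ i, t' i ∈ nashSeries (Fin n)) ∧ (∀ i, HasTaylorSeries (fun x => τ' x i) (t' i)) ∧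
      (∀ i, t' i - t i ∈ maximalIdeal (MvPowerSeries (Fin n) ℝ) ^ c) ∧
      ∀ j (p : (MvPolynomial (Fin n) ℝ)[X]), aevalTower (MvPolynomial.aeval t) (s j) p = 0 →
        aevalTower (MvPolynomial.aeval t') (s j) p = 0 := by
  obtain ⟨b, hbt, hb⟩ := (approximationProperty_nashSeries n).exists_isSpecialization_sumElim t
    (s := fun j => ⟨s j, hs j⟩) (fun j => (hs j).2) c
  choose τ hτ using fun i => (b i).2.1
  refine ⟨fun x i => τ i x, fun i => b i, fun i => (b i).2, hτ, hbt, fun j p hp => ?_⟩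
  have hroot := congrArg ((nashSeries (Fin n)).val.restrictScalars ℝ) (hb.aevalTower_eq_zero hp)
  rwa [algHom_aevalTower, map_zero] at hroot

end Germs

end NashArtin

open NashArtin

/-- Artin approximation for R equivalence of Nash map germs: an analytic solution $τ$ of
$φ ∘ τ = ψ$ can be approximated, to any prescribed order $c$, by a Nash diffeomorphism
germ $τ'$ with $φ ∘ τ' = ψ$. -/
theorem analytic_R_equiv_implies_Nash_R_equiv_with_approx {n m : ℕ}
    {φ ψ : (Fin n → ℝ) → (Fin m → ℝ)}
    (hφ : NashGerm φ) (hψ : NashGerm ψ)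
    (τ : (Fin n → ℝ) → (Fin n → ℝ))
    (hτ : AnalyticAt ℝ τ 0) (hτ0 : τ 0 = 0)
    (hτD : ∃ Dτ : (Fin n → ℝ) ≃L[ℝ] (Fin n → ℝ),
      HasFDerivAt τ (Dτ : (Fin n → ℝ) →L[ℝ] (Fin n → ℝ)) 0)
    (heq : ∀ᶠ x : Fin n → ℝ in 𝓝 0, φ (τ x) = ψ x) :
    ∀ c : ℕ, ∃ τ' : (Fin n → ℝ) → (Fin n → ℝ),
      NashDiffeoGerm τ' ∧
      (∀ᶠ x : Fin n → ℝ in 𝓝 0, φ (τ' x) = ψ x) ∧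
      ∀ k : ℕ, k < c → iteratedFDeriv ℝ k τ' 0 = iteratedFDeriv ℝ k τ 0 := by
  intro c
  obtain ⟨D, hD⟩ := hτD
  choose u hu hφu using (nashGerm_iff.mp hφ).2
  choose s hs hψs using (nashGerm_iff.mp hψ).2
  choose t ht using fun i => exists_hasTaylorSeries (analyticAt_pi_iff.mp hτ i)
  have hφτ (j : Fin m) : HasTaylorSeries ((φ · j) ∘ τ) (s j) :=
    (hψs j).congr (heq.mono fun x hx => congrFun hx.symm j)
  choose e he using fun j => exists_forall_hasTaylorSeries_comp (hu j).2 (hφu j) ht hτ0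
    (map_nhds_zero_of_hasFDerivAt_equiv hτ hτ0 hD) (hφτ j)
  obtain ⟨τ', t', ht'n, ht', htt', hspec⟩ :=
    exists_hasTaylorSeries_nash_specialization t hs (c + 2 + Finset.univ.sup e)
  have hτ' : AnalyticAt ℝ τ' 0 := analyticAt_pi_iff.mpr fun i => (ht' i).1
  have hO := sub_isBigO_of_forall_sub_mem ht ht' htt'
  have hτ'0 : τ' 0 = 0 := (apply_zero_eq_of_sub_isBigO hO (by omega)).trans hτ0
  have hD' := hasFDerivAt_of_sub_isBigO hO (by omega) hD
  have hφτ' (j : Fin m) := he j _ (le_add_left (Finset.le_sup (Finset.mem_univ j))) τ' t' ht' hτ'0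
    (map_nhds_zero_of_hasFDerivAt_equiv hτ' hτ'0 hD') htt' (hspec j)
  refine ⟨τ', ⟨nashGerm_iff.mpr ⟨hτ'0, fun i => ⟨_, ht'n i, ht' i⟩⟩, D, hD'⟩, ?_, fun k hk =>
    iteratedFDeriv_eq_of_sub_isBigO hτ' hτ hO (by omega)⟩
  filter_upwards [Filter.eventually_all.mpr fun j => ((hφτ' j).eq_iff (hψs j)).mp rfl] with x hx
  exact funext hx
end

section
/- Let f₁, …, fₘ be formal power series in ℝ[[x₁,…,xₙ]] with zero constant term, and let h be a formal power series in ℝ[[x₁,…,xₙ,y₁,…,yₘ]]. If the substitution yⱼ := fⱼ(x) (and xᵢ := xᵢ) sends h to the zero power series in ℝ[[x₁,…,xₙ]], then h belongs to the ideal of ℝ[[x₁,…,xₙ,y₁,…,yₘ]] generated by y₁ − f₁(x), …, yₘ − fₘ(x); that is, there exist β₁, …, βₘ ∈ ℝ[[x₁,…,xₙ,y₁,…,yₘ]] with h = Σ_{j=1}^{m} βⱼ·(yⱼ − fⱼ(x)). -/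
noncomputable section

/-- Substitution of power series (with zero constant term) into a multivariate formal
power series, defined coefficientwise: the coefficient of a monomial `d` of the result is
the (finite) sum, over monomials `e` of total degree at most that of `d`, of
`coeff e f * coeff d (∏ s, (a s) ^ (e s))`.  When every `a s` has zero constant
coefficient this is the usual substitution `f(a)`. -/
def psubst {σ τ : Type*} [Fintype σ] [DecidableEq σ]
    (a : σ → MvPowerSeries τ ℝ) (f : MvPowerSeries σ ℝ) : MvPowerSeries τ ℝ :=
  fun d =>
    ∑ e ∈ Finset.Iic (Finsupp.equivFunOnFinite.symm fun _ => d.sum fun _ k => k),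
      MvPowerSeries.coeff e f * MvPowerSeries.coeff d (e.prod fun s k => a s ^ k)

/-!
Replacing finitely many of the series `aₛ` substituted into `h` by other series `bₛ` changes the
result by an element of the ideal generated by the differences `aₛ - bₛ`. In the universal case,
where the differences are independent variables `wₛ`, this says that `h(v + w) - h(v)` has no
monomial free of `w`; the general case follows by specializing `v` and `w`. Comparing `h = h(x, y)`
with `h(x, f(x)) = 0` in this way gives the theorem.
-/

open MvPowerSeries

section CommRing

variable {R S σ τ : Type*} [CommRing R] [CommRing S] [Algebra R S]

theorem mem_span_X_image_iff {T : Set σ} (hT : T.Finite) {p : MvPowerSeries σ R} :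
    p ∈ Ideal.span (X '' T) ↔ ∀ d : σ →₀ ℕ, (∀ t ∈ T, d t = 0) → coeff d p = 0 := by
  classical
  induction T, hT using Set.Finite.induction_on generalizing p with
  | empty => simp [MvPowerSeries.ext_iff]
  | @insert t T _ _ ih =>
    simp only [Set.image_insert_eq, Ideal.mem_span_insert, Set.forall_mem_insert]
    constructor
    · rintro ⟨q, r, hr, rfl⟩ d ⟨hdt, hdT⟩
      rw [map_add, X_dvd_iff.1 (dvd_mul_left (X t) q) d hdt, ih.1 hr d hdT, add_zero]
    · intro hp
      let r : MvPowerSeries σ R := fun d => if d t = 0 then coeff d p else 0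
      have coeff_r (d : σ →₀ ℕ) : coeff d r = if d t = 0 then coeff d p else 0 := rfl
      have hr : r ∈ Ideal.span (X '' T) := ih.2 fun d hdT => by
        rw [coeff_r]
        split_ifs with hdt
        exacts [hp d ⟨hdt, hdT⟩, rfl]
      obtain ⟨q, hq⟩ : X t ∣ p - r := X_dvd_iff.2 fun d hdt => by
        rw [map_sub, coeff_r, if_pos hdt, sub_self]
      exact ⟨q, r, hr, by rw [mul_comm, ← hq, sub_add_cancel]⟩

theorem finsuppProd_pow_sub_finsuppProd_pow_mem {I : Ideal R} {a b : σ → R}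
    (hab : ∀ s, a s - b s ∈ I) (e : σ →₀ ℕ) :
    (e.prod fun s k => a s ^ k) - (e.prod fun s k => b s ^ k) ∈ I := by
  simp only [← Ideal.Quotient.eq] at hab ⊢
  simp only [map_finsuppProd, map_pow, hab]

theorem subst_sub_subst_mem_span_X_image {a b : σ → MvPowerSeries τ S}
    (ha : HasSubst a) (hb : HasSubst b) {T : Set τ} (hT : T.Finite)
    (hab : ∀ s, a s - b s ∈ Ideal.span (X '' T)) (h : MvPowerSeries σ R) :
    subst a h - subst b h ∈ Ideal.span (X '' T) := by
  refine (mem_span_X_image_iff hT).2 fun d hd => ?_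
  have coeff_prod_eq (e : σ →₀ ℕ) :
      coeff d (e.prod fun s k => a s ^ k) = coeff d (e.prod fun s k => b s ^ k) := by
    rw [← sub_eq_zero, ← map_sub]
    exact (mem_span_X_image_iff hT).1 (finsuppProd_pow_sub_finsuppProd_pow_mem hab e) d hd
  rw [map_sub, coeff_subst ha, coeff_subst hb, sub_eq_zero]
  exact finsum_congr fun e => by rw [coeff_prod_eq]

theorem hasSubst_X_comp {e : σ → τ} (he : e.Injective) :
    HasSubst (X ∘ e : σ → MvPowerSeries τ R) :=
  have := Filter.tendstoCofinite_of_injective he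
  HasSubst.X_comp e

theorem hasSubst_sub {a b : σ → MvPowerSeries τ S} (ha : HasSubst a) (hb : HasSubst b) :
    HasSubst (a - b) :=
  have sub_mem : a - b ∈ hasSubstIdeal := Ideal.sub_mem _ ha hb
  sub_mem

theorem hasSubst_indicator {a : σ → MvPowerSeries τ S} (ha : HasSubst a) (T : Set σ) :
    HasSubst (T.indicator a) := by
  have indicator_eq : T.indicator a = T.indicator 1 * a :=
    funext fun s => by simp [← Set.indicator_mul_left]
  exact indicator_eq ▸ ha.mul_left _

theorem hasSubst_sumElim {υ : Type*} {a : σ → MvPowerSeries υ S} {b : τ → MvPowerSeries υ S}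
    (ha : HasSubst a) (hb : HasSubst b) : HasSubst (Sum.elim a b) where
  const_coeff := Sum.rec ha.const_coeff hb.const_coeff
  coeff_zero d := Set.finite_preimage_inl_and_inr.1 ⟨ha.coeff_zero d, hb.coeff_zero d⟩

theorem subst_sub_subst_mem_span_image_sub {a b : σ → MvPowerSeries τ S}
    (ha : HasSubst a) (hb : HasSubst b) {T : Set σ} (hT : T.Finite) (hab : Set.EqOn a b Tᶜ)
    (h : MvPowerSeries σ R) :
    subst a h - subst b h ∈ Ideal.span ((a - b) '' T) := by
  let v : σ → MvPowerSeries (σ ⊕ σ) R := X ∘ Sum.inl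
  let w : σ → MvPowerSeries (σ ⊕ σ) R := T.indicator (X ∘ Sum.inr)
  have hv : HasSubst v := hasSubst_X_comp Sum.inl_injective
  have hw : HasSubst w := hasSubst_indicator (hasSubst_X_comp Sum.inr_injective) T
  have hspec : HasSubst (Sum.elim b (a - b)) := hasSubst_sumElim hb (hasSubst_sub ha hb)
  have universal : subst (v + w) h - subst v h ∈ Ideal.span (X '' (Sum.inr '' T)) := by
    refine subst_sub_subst_mem_span_X_image (hv.add hw) hv (hT.image _) (fun s => ?_) h
    by_cases hs : s ∈ T
    · simpa [w, hs] using Ideal.subset_span (Set.mem_image_of_mem X (Set.mem_image_of_mem _ hs))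
    · simp [w, hs]
  have spec_v (s : σ) : subst (Sum.elim b (a - b)) (v s) = b s := subst_X hspec _
  have spec_w (s : σ) : subst (Sum.elim b (a - b)) (w s) = a s - b s := by
    by_cases hs : s ∈ T
    · simp [w, hs, subst_X hspec]
    · have w_eq_zero : w s = 0 := Set.indicator_of_notMem hs _
      rw [hab hs, sub_self, w_eq_zero, ← substAlgHom_apply hspec, map_zero]
  have specialized := Ideal.mem_map_of_mem (substAlgHom (R := R) hspec) universal
  simp only [substAlgHom_apply, subst_sub hspec, subst_comp_subst_apply (hv.add hw) hspec,
    subst_comp_subst_apply hv hspec, Pi.add_apply, subst_add hspec, spec_v, spec_w,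
    add_sub_cancel, Ideal.map_span, Set.image_image, subst_X hspec, Sum.elim_inr] at specialized
  exact specialized

theorem mem_ideal_of_subst_eq_zero_general [Finite τ] {f : τ → MvPowerSeries σ R}
    (hf : ∀ j, IsNilpotent (constantCoeff (f j))) {h : MvPowerSeries (σ ⊕ τ) R}
    (hsub : subst (Sum.elim X f) h = 0) :
    h ∈ Ideal.span (Set.range fun j =>
      (X (Sum.inr j) - subst (fun i => X (Sum.inl i)) (f j) : MvPowerSeries (σ ⊕ τ) R)) := by
  let x : σ → MvPowerSeries (σ ⊕ τ) R := X ∘ Sum.inl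
  have hx : HasSubst x := hasSubst_X_comp Sum.inl_injective
  have hXf : HasSubst (Sum.elim X f) :=
    hasSubst_sumElim HasSubst.X (hasSubst_of_constantCoeff_nilpotent hf)
  let b : σ ⊕ τ → MvPowerSeries (σ ⊕ τ) R := fun s => subst x (Sum.elim X f s)
  have hb : HasSubst b := by simpa using hXf.comp hx
  have subst_b : subst b h = 0 := by
    rw [← subst_comp_subst_apply hXf hx, hsub, ← substAlgHom_apply hx, map_zero]
  have eqOn_compl : Set.EqOn X b (Set.range Sum.inr)ᶜ := by
    rintro (i | j) hs
    · simp [b, x, subst_X hx]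
    · exact absurd (Set.mem_range_self j) hs
  have mem := subst_sub_subst_mem_span_image_sub HasSubst.X hb (Set.finite_range Sum.inr)
    eqOn_compl h
  rw [subst_b, subst_self, id, sub_zero, ← Set.range_comp] at mem
  exact mem

end CommRing

theorem degree_le_order_finsuppProd_pow {R σ τ : Type*} [CommSemiring R]
    {a : σ → MvPowerSeries τ R} (ha : ∀ s, constantCoeff (a s) = 0) (e : σ →₀ ℕ) :
    (e.degree : ℕ∞) ≤ (e.prod fun s k => a s ^ k).order :=
  calc (e.degree : ℕ∞) = ∑ s ∈ e.support, (e s : ℕ∞) := by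
        rw [Finsupp.degree_apply, Nat.cast_sum]
    _ ≤ ∑ s ∈ e.support, (a s ^ e s).order :=
        Finset.sum_le_sum fun s _ => le_order_pow_of_constantCoeff_eq_zero _ (ha s)
    _ ≤ (e.prod fun s k => a s ^ k).order := le_order_prod _ _

theorem psubst_eq_subst {σ τ : Type*} [Fintype σ] [DecidableEq σ]
    {a : σ → MvPowerSeries τ ℝ} (ha : ∀ s, constantCoeff (a s) = 0) (f : MvPowerSeries σ ℝ) :
    psubst a f = subst a f := by
  ext d
  rw [coeff_subst (hasSubst_of_constantCoeff_zero ha)]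
  refine (finsum_eq_sum_of_support_subset _ fun e he => ?_).symm
  have coeff_ne_zero : coeff d (e.prod fun s k => a s ^ k) ≠ 0 :=
    right_ne_zero_of_mul (Function.mem_support.1 he)
  have degree_le : e.degree ≤ d.degree := by
    exact_mod_cast (degree_le_order_finsuppProd_pow ha e).trans (order_le coeff_ne_zero)
  exact Finset.mem_coe.2 (Finset.mem_Iic.2 fun s => (Finsupp.le_degree s e).trans degree_le)

/-- If a formal power series `h(x,y)` vanishes under the substitution `y := f(x)` (where
the `fⱼ` have zero constant term), then `h` lies in the ideal generated by the
`yⱼ - fⱼ(x)`. -/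
theorem mem_ideal_of_subst_eq_zero (n m : ℕ)
    (f : Fin m → MvPowerSeries (Fin n) ℝ)
    (hf : ∀ j, MvPowerSeries.constantCoeff (f j) = 0)
    (h : MvPowerSeries (Fin n ⊕ Fin m) ℝ)
    (hsub : psubst (Sum.elim MvPowerSeries.X f) h = 0) :
    ∃ β : Fin m → MvPowerSeries (Fin n ⊕ Fin m) ℝ,
      h = ∑ j : Fin m, β j *
        (MvPowerSeries.X (Sum.inr j) -
          psubst (fun i : Fin n => MvPowerSeries.X (Sum.inl i)) (f j)) := by
  rw [psubst_eq_subst (Sum.rec (by simp) hf)] at hsub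
  simp_rw [psubst_eq_subst (a := fun i : Fin n => X (Sum.inl i)) (by simp), eq_comm (a := h)]
  exact Ideal.mem_span_range_iff_exists_fun.1
    (mem_ideal_of_subst_eq_zero_general (fun j => by simp [hf j]) hsub)
end
end

section
/- For every natural number c there exists a constant B > 0 such that for all integers i, k with 1 ≤ i ≤ k, one has (k!/(i−1)!)·k^{i−k+c}·2^{−i} ≤ B. -/
open scoped Nat

/-!
Write `i = n + 1` and regroup `(k! / n!) * k ^ (n + 1 - k + c) * r ^ (-(n + 1))` as
`(k ^ (c + 1) / r) * (k! / k ^ k) * ((k / r) ^ n / n!)`. The last factor is a single term of the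
series of `exp (k / r)`, so it is at most `exp (k / r)` uniformly in `n`, while by Stirling
`k! / k ^ k` is at most `e * √k * exp (-k)`. For `r > 1` the resulting exponential
`exp (-(1 - 1 / r) * k)` beats every power of `k`.
-/

open Real

theorem stirlingSeq_le_exp_one_div_sqrt_two (k : ℕ) :
    Stirling.stirlingSeq k ≤ exp 1 / √2 := by
  cases k with
  | zero => rw [Stirling.stirlingSeq_zero]; positivity
  | succ m =>
    rw [← Stirling.stirlingSeq_one]
    exact Stirling.stirlingSeq'_antitone m.zero_le

theorem factorial_div_pow_self_le {k : ℕ} (hk : k ≠ 0) :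
    (k ! : ℝ) / (k : ℝ) ^ k ≤ exp 1 * √k * exp (-k) := by
  have : (k : ℝ) ≠ 0 := Nat.cast_ne_zero.mpr hk
  have exp_neg_eq : exp (-(k : ℝ)) = (exp 1 ^ k)⁻¹ := by rw [exp_neg, exp_one_pow]
  calc (k ! : ℝ) / (k : ℝ) ^ k
      = Stirling.stirlingSeq k * (√2 * √k * exp (-k)) := by
        rw [Stirling.stirlingSeq, sqrt_mul zero_le_two, div_pow, exp_neg_eq]
        field_simp
    _ ≤ exp 1 / √2 * (√2 * √k * exp (-k)) := by
        gcongr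
        exact stirlingSeq_le_exp_one_div_sqrt_two k
    _ = exp 1 * √k * exp (-k) := by field_simp

theorem exists_forall_natCast_rpow_mul_exp_neg_mul_le (s : ℝ) {b : ℝ} (hb : 0 < b) :
    ∃ M : ℝ, 0 < M ∧ ∀ k : ℕ, (k : ℝ) ^ s * exp (-b * k) ≤ M := by
  obtain ⟨M, hM⟩ := ((tendsto_rpow_mul_exp_neg_mul_atTop_nhds_zero s b hb).comp
    tendsto_natCast_atTop_atTop).bddAbove_range
  exact ⟨max M 1, by positivity, fun k ↦ (hM ⟨k, rfl⟩).trans (le_max_left M 1)⟩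

theorem factorial_div_factorial_mul_zpow_mul_zpow_eq {K : Type*} [Field K] {k : ℕ}
    (hk : (k : K) ≠ 0) (r : K) (c : ℤ) (n : ℕ) :
    (k ! : K) / (n ! : K) * (k : K) ^ (((n + 1 : ℕ) : ℤ) - (k : ℤ) + c) *
        r ^ (-((n + 1 : ℕ) : ℤ)) =
      (k : K) ^ (c + 1) / r * ((k ! : K) / (k : K) ^ k) * (((k : K) / r) ^ n / (n ! : K)) := by
  have exponent_eq : ((n + 1 : ℕ) : ℤ) - (k : ℤ) + c = (c + 1) + n - k := by push_cast; ring
  rw [exponent_eq, zpow_sub₀ hk, zpow_add₀ hk, zpow_neg, zpow_natCast, zpow_natCast,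
    zpow_natCast, pow_succ, div_pow]
  ring

theorem factorial_div_factorial_mul_zpow_mul_zpow_le {k : ℕ} (hk : k ≠ 0) {r : ℝ} (hr : 0 < r)
    (c : ℤ) (n : ℕ) :
    (k ! : ℝ) / (n ! : ℝ) * (k : ℝ) ^ (((n + 1 : ℕ) : ℤ) - (k : ℤ) + c) *
        r ^ (-((n + 1 : ℕ) : ℤ)) ≤
      exp 1 / r * ((k : ℝ) ^ ((c : ℝ) + 1 + 1 / 2) * exp (-(1 - 1 / r) * k)) := by
  have hk' : (0 : ℝ) < k := by exact_mod_cast hk.pos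
  have rpow_eq : (k : ℝ) ^ ((c : ℝ) + 1 + 1 / 2) = (k : ℝ) ^ (c + 1) * √k := by
    rw [rpow_add hk', ← sqrt_eq_rpow, ← rpow_intCast, Int.cast_add, Int.cast_one]
  have exp_eq : exp (-(1 - 1 / r) * k) = exp (-k) * exp (k / r) := by
    rw [← exp_add]
    ring_nf
  calc (k ! : ℝ) / (n ! : ℝ) * (k : ℝ) ^ (((n + 1 : ℕ) : ℤ) - (k : ℤ) + c) *
        r ^ (-((n + 1 : ℕ) : ℤ))
      = (k : ℝ) ^ (c + 1) / r * ((k ! : ℝ) / (k : ℝ) ^ k) * (((k : ℝ) / r) ^ n / (n ! : ℝ)) :=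
        factorial_div_factorial_mul_zpow_mul_zpow_eq hk'.ne' r c n
    _ ≤ (k : ℝ) ^ (c + 1) / r * (exp 1 * √k * exp (-k)) * exp (k / r) := by
        gcongr
        · exact factorial_div_pow_self_le hk
        · exact pow_div_factorial_le_exp _ (by positivity) n
    _ = exp 1 / r * ((k : ℝ) ^ ((c : ℝ) + 1 + 1 / 2) * exp (-(1 - 1 / r) * k)) := by
        rw [rpow_eq, exp_eq]
        ring

theorem falling_factorial_bound_general {r : ℝ} (hr : 1 < r) (c : ℤ) :
    ∃ B : ℝ, 0 < B ∧ ∀ i k : ℕ, 1 ≤ i → 1 ≤ k →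
      ((k ! : ℝ) / ((i - 1)! : ℝ)) * (k : ℝ) ^ ((i : ℤ) - (k : ℤ) + c) * r ^ (-(i : ℤ)) ≤ B := by
  have r_pos : 0 < r := one_pos.trans hr
  have rate_pos : 0 < 1 - 1 / r := sub_pos.mpr ((div_lt_one r_pos).mpr hr)
  obtain ⟨M, M_pos, hM⟩ :=
    exists_forall_natCast_rpow_mul_exp_neg_mul_le ((c : ℝ) + 1 + 1 / 2) rate_pos
  refine ⟨exp 1 / r * M, by positivity, fun i k hi hk ↦ ?_⟩
  obtain ⟨n, rfl⟩ := Nat.exists_eq_add_of_le' hi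
  rw [Nat.add_sub_cancel]
  calc _ ≤ exp 1 / r * ((k : ℝ) ^ ((c : ℝ) + 1 + 1 / 2) * exp (-(1 - 1 / r) * k)) :=
        factorial_div_factorial_mul_zpow_mul_zpow_le (Nat.one_le_iff_ne_zero.mp hk) r_pos c n
    _ ≤ exp 1 / r * M := by
        gcongr
        exact hM k

/-- For every `c : ℕ` there is a bound `B > 0` such that
`(k!/(i−1)!)·k^{i−k+c}·2^{−i} ≤ B` for all `1 ≤ i ≤ k`. -/
theorem falling_factorial_bound (c : ℕ) :
    ∃ B : ℝ, 0 < B ∧ ∀ i k : ℕ, 1 ≤ i → i ≤ k →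
      ((k ! : ℝ) / ((i - 1)! : ℝ)) * (k : ℝ) ^ ((i : ℤ) - (k : ℤ) + (c : ℤ)) *
        (2 : ℝ) ^ (-(i : ℤ)) ≤ B := by
  obtain ⟨B, B_pos, hB⟩ := falling_factorial_bound_general one_lt_two c
  exact ⟨B, B_pos, fun i k hi hik ↦ hB i k hi (hi.trans hik)⟩
end

section
/- For all natural numbers c and c′ there exists a constant b > 0 such that for all integers k ≥ 1 and i ≥ 0, one has k!·(2k)^{i+1+c} / ((k+i)!·2^{k+i+1−c′}) ≤ b / (k²·(i+1)²). In particular, for all natural numbers c and c′ the double series Σ_{k=1}^{∞} Σ_{i=0}^{∞} k!·(2k)^{i+1+c} / ((k+i)!·2^{k+i+1−c′}) converges. -/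
open scoped Nat

/-!
With `2` replaced by any `a > 1` and `c'` by an integer `d`, the summand equals
`a ^ (c + d) * (k ^ (c + 1) / a ^ k) * (k! * k ^ i / (k + i)!)`. The reciprocal of the last factor
is `∏ j ∈ {1, …, i}, (1 + j / k) ≥ 1 + i * (i + 1) / (2 * k)`, so the last factor is at most
`4 * k / (i + 1) ^ 2`, and the exponential `a ^ k` absorbs every power of `k`.
-/

lemma pow_mul_two_mul_add_le_ascFactorial (k i : ℕ) :
    k ^ i * (2 * k + i * (i + 1)) ≤ 2 * k * (k + 1).ascFactorial i := by
  induction i with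
  | zero => simp
  | succ i ih =>
    have step : k * (2 * k + (i + 1) * (i + 1 + 1)) ≤ (k + 1 + i) * (2 * k + i * (i + 1)) := by
      nlinarith [Nat.zero_le (i * (i + 1) ^ 2)]
    calc k ^ (i + 1) * (2 * k + (i + 1) * (i + 1 + 1))
        = k ^ i * (k * (2 * k + (i + 1) * (i + 1 + 1))) := by ring
      _ ≤ k ^ i * ((k + 1 + i) * (2 * k + i * (i + 1))) := Nat.mul_le_mul_left _ step
      _ = (k + 1 + i) * (k ^ i * (2 * k + i * (i + 1))) := by ring
      _ ≤ (k + 1 + i) * (2 * k * (k + 1).ascFactorial i) := Nat.mul_le_mul_left _ ih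
      _ = 2 * k * (k + 1).ascFactorial (i + 1) := by rw [Nat.ascFactorial_succ]; ring

lemma pow_mul_succ_sq_le_ascFactorial {k : ℕ} (hk : 1 ≤ k) (i : ℕ) :
    k ^ i * (i + 1) ^ 2 ≤ 4 * k * (k + 1).ascFactorial i := by
  have succ_sq_le : (i + 1) ^ 2 ≤ 2 * (2 * k + i * (i + 1)) := by nlinarith
  calc k ^ i * (i + 1) ^ 2
      ≤ k ^ i * (2 * (2 * k + i * (i + 1))) := Nat.mul_le_mul_left _ succ_sq_le
    _ = 2 * (k ^ i * (2 * k + i * (i + 1))) := by ring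
    _ ≤ 2 * (2 * k * (k + 1).ascFactorial i) :=
        Nat.mul_le_mul_left _ (pow_mul_two_mul_add_le_ascFactorial k i)
    _ = 4 * k * (k + 1).ascFactorial i := by ring

lemma factorial_mul_pow_div_factorial_add_le {k : ℕ} (hk : 1 ≤ k) (i : ℕ) :
    (k ! : ℝ) * (k : ℝ) ^ i / ((k + i)! : ℝ) ≤ 4 * k / ((i : ℝ) + 1) ^ 2 := by
  have pow_mul_le : (k : ℝ) ^ i * ((i : ℝ) + 1) ^ 2 ≤ 4 * k * ((k + 1).ascFactorial i : ℝ) :=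
    mod_cast pow_mul_succ_sq_le_ascFactorial hk i
  rw [div_le_div_iff₀ (by positivity) (by positivity), ← Nat.factorial_mul_ascFactorial]
  push_cast
  calc (k ! : ℝ) * (k : ℝ) ^ i * ((i : ℝ) + 1) ^ 2
      = k ! * ((k : ℝ) ^ i * ((i : ℝ) + 1) ^ 2) := mul_assoc _ _ _
    _ ≤ k ! * (4 * k * ((k + 1).ascFactorial i : ℝ)) := by gcongr
    _ = 4 * k * (k ! * ((k + 1).ascFactorial i : ℝ)) := mul_left_comm _ _ _

lemma exists_pos_forall_pow_div_pow_le {a : ℝ} (ha : 1 < a) (n : ℕ) :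
    ∃ M : ℝ, 0 < M ∧ ∀ k : ℕ, (k : ℝ) ^ n / a ^ k ≤ M := by
  obtain ⟨M, hM⟩ := (tendsto_pow_const_div_const_pow_of_one_lt n ha).bddAbove_range
  exact ⟨max M 1, by positivity, fun k => (hM ⟨k, rfl⟩).trans (le_max_left M 1)⟩

lemma factorial_ratio_eq_mul {K : Type*} [Field K] {a : K} (ha : a ≠ 0)
    (c : ℕ) (d : ℤ) (k i : ℕ) :
    (k ! : K) * (a * (k : K)) ^ (i + 1 + c) /
        (((k + i)! : K) * a ^ ((k : ℤ) + (i : ℤ) + 1 - d)) =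
      a ^ ((c : ℤ) + d) * ((k : K) ^ (c + 1) / a ^ k) *
        ((k ! : K) * (k : K) ^ i / ((k + i)! : K)) := by
  have zpow_eq : a ^ ((k : ℤ) + (i : ℤ) + 1 - d) = a ^ k * a ^ i * a / a ^ d := by
    rw [zpow_sub₀ ha, zpow_add_one₀ ha, zpow_add₀ ha, zpow_natCast, zpow_natCast]
  rw [zpow_eq, zpow_add₀ ha, zpow_natCast]
  field_simp
  ring

lemma exists_factorial_ratio_le {a : ℝ} (ha : 1 < a) (c m : ℕ) (d : ℤ) :
    ∃ b : ℝ, 0 < b ∧ ∀ k i : ℕ, 1 ≤ k →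
      (k ! : ℝ) * (a * (k : ℝ)) ^ (i + 1 + c) /
          (((k + i)! : ℝ) * a ^ ((k : ℤ) + (i : ℤ) + 1 - d)) ≤
        b / ((k : ℝ) ^ m * ((i : ℝ) + 1) ^ 2) := by
  have ha₀ : 0 < a := one_pos.trans ha
  obtain ⟨M, hM₀, hM⟩ := exists_pos_forall_pow_div_pow_le ha (c + 2 + m)
  refine ⟨4 * a ^ ((c : ℤ) + d) * M, by positivity, fun k i hk => ?_⟩
  have : (0 : ℝ) < k := mod_cast hk
  calc (k ! : ℝ) * (a * (k : ℝ)) ^ (i + 1 + c) /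
        (((k + i)! : ℝ) * a ^ ((k : ℤ) + (i : ℤ) + 1 - d))
      = a ^ ((c : ℤ) + d) * ((k : ℝ) ^ (c + 1) / a ^ k) *
          ((k ! : ℝ) * (k : ℝ) ^ i / ((k + i)! : ℝ)) := factorial_ratio_eq_mul ha₀.ne' c d k i
    _ ≤ a ^ ((c : ℤ) + d) * ((k : ℝ) ^ (c + 1) / a ^ k) * (4 * k / ((i : ℝ) + 1) ^ 2) :=
        mul_le_mul_of_nonneg_left (factorial_mul_pow_div_factorial_add_le hk i) (by positivity)
    _ = 4 * a ^ ((c : ℤ) + d) * ((k : ℝ) ^ (c + 2 + m) / a ^ k) /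
          ((k : ℝ) ^ m * ((i : ℝ) + 1) ^ 2) := by
        field_simp
        ring
    _ ≤ 4 * a ^ ((c : ℤ) + d) * M / ((k : ℝ) ^ m * ((i : ℝ) + 1) ^ 2) := by
        gcongr
        exact hM k

lemma summable_prod_of_le_div_sq_mul_sq {f : ℕ × ℕ → ℝ} {b : ℝ} (hf₀ : ∀ p, 0 ≤ f p)
    (hf : ∀ p, f p ≤ b / (((p.1 : ℝ) + 1) ^ 2 * ((p.2 : ℝ) + 1) ^ 2)) : Summable f := by
  have summable_inv_sq : Summable fun n : ℕ => (((n : ℝ) + 1) ^ 2)⁻¹ := by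
    simpa using (summable_nat_add_iff 1).2 (Real.summable_nat_pow_inv.2 one_lt_two)
  have summable_prod := summable_inv_sq.mul_of_nonneg summable_inv_sq
    (fun n => by positivity) (fun n => by positivity)
  refine .of_nonneg_of_le hf₀ (fun p => ?_) (summable_prod.mul_left b)
  simpa only [div_eq_mul_inv, mul_inv] using hf p

theorem factorial_ratio_double_series_bound_general {a : ℝ} (ha : 1 < a) (c : ℕ) (d : ℤ) :
    (∃ b : ℝ, 0 < b ∧ ∀ k i : ℕ, 1 ≤ k →
      (k ! : ℝ) * (a * (k : ℝ)) ^ (i + 1 + c) /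
          (((k + i)! : ℝ) * a ^ ((k : ℤ) + (i : ℤ) + 1 - d)) ≤
        b / ((k : ℝ) ^ 2 * ((i : ℝ) + 1) ^ 2)) ∧
    Summable (fun p : ℕ × ℕ =>
      ((p.1 + 1)! : ℝ) * (a * ((p.1 : ℝ) + 1)) ^ (p.2 + 1 + c) /
        (((p.1 + 1 + p.2)! : ℝ) * a ^ (((p.1 : ℤ) + 1) + (p.2 : ℤ) + 1 - d))) := by
  have : 0 < a := one_pos.trans ha
  obtain ⟨b, hb₀, hb⟩ := exists_factorial_ratio_le ha c 2 d
  refine ⟨⟨b, hb₀, hb⟩, summable_prod_of_le_div_sq_mul_sq (b := b) (fun p => by positivity) ?_⟩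
  exact fun p => mod_cast hb (p.1 + 1) p.2 p.1.succ_pos

/-- For all `c, c' : ℕ` there is `b > 0` with
`k!·(2k)^{i+1+c} / ((k+i)!·2^{k+i+1−c'}) ≤ b/(k²(i+1)²)` for all `k ≥ 1`, `i ≥ 0`;
in particular the corresponding double series converges. -/
theorem factorial_ratio_double_series_bound (c c' : ℕ) :
    (∃ b : ℝ, 0 < b ∧ ∀ k i : ℕ, 1 ≤ k →
      (k ! : ℝ) * (2 * (k : ℝ)) ^ (i + 1 + c) /
          (((k + i)! : ℝ) * (2 : ℝ) ^ ((k : ℤ) + (i : ℤ) + 1 - (c' : ℤ))) ≤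
        b / ((k : ℝ) ^ 2 * ((i : ℝ) + 1) ^ 2)) ∧
    Summable (fun p : ℕ × ℕ =>
      ((p.1 + 1)! : ℝ) * (2 * ((p.1 : ℝ) + 1)) ^ (p.2 + 1 + c) /
        (((p.1 + 1 + p.2)! : ℝ) * (2 : ℝ) ^ (((p.1 : ℤ) + 1) + (p.2 : ℤ) + 1 - (c' : ℤ)))) :=
  factorial_ratio_double_series_bound_general one_lt_two c c'
end
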